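/- arXiv:math/0206290 — 2 statements merged into one kernel-verified Lean document; each statement's English description precedes it below -/
import Mathlib

section
/- Let Φ be irreducible reduced, not of type A or G₂, and let β = Σᵢbᵢαᵢ with β ≥ Σᵢαᵢ (so all bᵢ ≥ 1). Write β = Σᵢaᵢωᵢ in fundamental weights. Let I(β) be the set of irreducible subsets I ⊆ [ℓ] not of type A with β ≥ θ_I. Assume ht₀⁺(β) ≤ 2 and [ℓ] ∉ I(β). Then there exists I ∈ I(β) such that the coefficient a_{f(I)} > 0, where f(I) is the unique index such that θ_I = ω_{f(I)} − η for some dominant η with support disjoint from I. -/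
open scoped RealInnerProductSpace

noncomputable section

variable {E : Type*} [NormedAddCommGroup E] [InnerProductSpace ℝ E]

/-- The pairing `⟨x, α∨⟩ = 2(x,α)/(α,α)`. -/
def cpair (x α : E) : ℝ := 2 * ⟪x, α⟫ / ⟪α, α⟫

/-- Reflection in the hyperplane orthogonal to `α`. -/
def wrefl (α x : E) : E := x - cpair x α • α

/-- An irreducible reduced root system with a chosen base `simple : Fin ℓ → E`. -/
structure RootSystemData (ℓ : ℕ) (E : Type*) [NormedAddCommGroup E]
    [InnerProductSpace ℝ E] where
  roots : Finset E
  simple : Fin ℓ → E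
  simple_mem : ∀ i, simple i ∈ roots
  root_ne_zero : ∀ α ∈ roots, α ≠ 0
  reduced : ∀ α ∈ roots, (2 : ℝ) • α ∉ roots
  cpair_int : ∀ α ∈ roots, ∀ β ∈ roots, ∃ n : ℤ, cpair β α = (n : ℝ)
  reflect_mem : ∀ α ∈ roots, ∀ β ∈ roots, wrefl α β ∈ roots
  simple_indep : LinearIndependent ℝ simple
  root_decomp : ∀ α ∈ roots,
    (∃ c : Fin ℓ → ℕ, α = ∑ i, (c i : ℝ) • simple i) ∨
    (∃ c : Fin ℓ → ℕ, α = -∑ i, (c i : ℝ) • simple i)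
  irred : ∀ S : Finset (Fin ℓ), S.Nonempty →
    (∀ i ∈ S, ∀ j ∉ S, ⟪simple i, simple j⟫ = 0) → S = Finset.univ

namespace RootSystemData

variable {ℓ : ℕ} (R : RootSystemData ℓ E)

/-- Integral weights. -/
def IsIntegral (x : E) : Prop := ∀ α ∈ R.roots, ∃ n : ℤ, cpair x α = (n : ℝ)

/-- Dominant (integral) weights. -/
def IsDominant (x : E) : Prop :=
  R.IsIntegral x ∧ ∀ i, 0 ≤ cpair x (R.simple i)

/-- The dominant order: `R.wle μ λ` means `μ ≤ λ`, i.e. `λ - μ` is a nonnegative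
integer combination of the simple roots. -/
def wle (μ lam : E) : Prop :=
  ∃ c : Fin ℓ → ℕ, lam - μ = ∑ i, (c i : ℝ) • R.simple i

/-- Minuscule weights: nonzero dominant weights all of whose pairings with roots
lie in `{0, 1, -1}`. -/
def IsMinuscule (x : E) : Prop :=
  R.IsDominant x ∧ x ≠ 0 ∧
  ∀ α ∈ R.roots, cpair x α = 0 ∨ cpair x α = 1 ∨ cpair x α = -1

/-- `y` lies in the Weyl group orbit of `x`. -/
def InWeylOrbit (x y : E) : Prop :=
  ∃ l : List E, (∀ α ∈ l, α ∈ R.roots) ∧ y = l.foldr wrefl x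

/-- `R.IsDualOf μ λ` expresses `μ = -w₀ λ`: `μ` is the dominant element of the
Weyl orbit of `-λ`. -/
def IsDualOf (μ lam : E) : Prop := R.IsDominant μ ∧ R.InWeylOrbit (-lam) μ

/-- Low triples of dominant weights. -/
def LowTriple (lam mu nu : E) : Prop :=
  R.IsDominant lam ∧ R.IsDominant mu ∧ R.IsDominant nu ∧
  (∀ lam' mu' : E, R.IsDominant lam' → R.IsDominant mu' →
    R.wle lam' lam → R.wle mu' mu → R.wle nu (lam' + mu') → lam' = lam ∧ mu' = mu) ∧
  R.wle (nu + ∑ i, R.simple i) (lam + mu)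

/-- Covering relation in the poset of dominant weights. -/
def Covers (lam mu : E) : Prop :=
  R.IsDominant lam ∧ R.IsDominant mu ∧ R.wle mu lam ∧ mu ≠ lam ∧
  ∀ η, R.IsDominant η → R.wle mu η → R.wle η lam → η = mu ∨ η = lam

/-- A root of the subsystem `Φ_I` generated by the simple roots indexed by `I`. -/
def IsRootOf (I : Finset (Fin ℓ)) (β : E) : Prop :=
  β ∈ R.roots ∧ ∃ c : Fin ℓ → ℤ, (∀ i, c i ≠ 0 → i ∈ I) ∧
    β = ∑ i, (c i : ℝ) • R.simple i

/-- A short root of `Φ_I`. -/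
def IsShortRootOf (I : Finset (Fin ℓ)) (β : E) : Prop :=
  R.IsRootOf I β ∧ ∀ γ, R.IsRootOf I γ → ⟪β, β⟫ ≤ ⟪γ, γ⟫

/-- `θ` is the highest short root of `Φ_I`. -/
def IsHighestShortRoot (I : Finset (Fin ℓ)) (θ : E) : Prop :=
  R.IsShortRootOf I θ ∧ ∀ γ, R.IsShortRootOf I γ → R.wle γ θ

/-- `I` indexes a connected (i.e. irreducible) subdiagram of the Dynkin diagram. -/
def Connected (I : Finset (Fin ℓ)) : Prop :=
  I.Nonempty ∧ ∀ S ⊆ I, S.Nonempty →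
    (∀ i ∈ S, ∀ j ∈ I, j ∉ S → ⟪R.simple i, R.simple j⟫ = 0) → S = I

/-- `I` is of type A: the Cartan matrix of `Φ_I` is that of a type `A` chain. -/
def IsTypeASub (I : Finset (Fin ℓ)) : Prop :=
  ∃ e : Fin I.card ≃ {i // i ∈ I}, ∀ a b : Fin I.card,
    cpair (R.simple (e b).1) (R.simple (e a).1) =
      if a = b then 2
      else if (a : ℕ) + 1 = (b : ℕ) ∨ (b : ℕ) + 1 = (a : ℕ) then -1 else 0

/-- The subdiagram indexed by `I` is simply laced. -/
def SimplyLaced (I : Finset (Fin ℓ)) : Prop :=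
  ∀ i ∈ I, ∀ j ∈ I, i ≠ j →
    cpair (R.simple i) (R.simple j) = 0 ∨ cpair (R.simple i) (R.simple j) = -1

end RootSystemData

variable {ℓ : ℕ}

/-- The Cartan matrix of type F₄ (Bourbaki numbering). -/
def F4Cartan : Fin 4 → Fin 4 → ℝ :=
  ![![2, -1, 0, 0], ![-1, 2, -1, 0], ![0, -2, 2, -1], ![0, 0, -1, 2]]

/-- `R` is of type F₄. -/
def RootSystemData.IsF4 (R : RootSystemData ℓ E) : Prop :=
  ∃ e : Fin 4 ≃o Fin ℓ, ∀ a b : Fin 4,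
    cpair (R.simple (e b)) (R.simple (e a)) = F4Cartan a b

/-!
Call a short root `γ = ∑ cᵢ αᵢ` locally fundamental with peak `f` if it pairs with the simple
coroots of its support as `ω_f` does. Such a `γ` is the highest short root of its support, differs
from `ω_f` by a dominant weight vanishing on that support, and has connected support not of
type A: the pairings of the highest root of a type A chain add up to two. A short root with
`c_f |α_f|² ≥ 2 |γ|²` dominates a locally fundamental one with peak `f`, namely a minimal short
root below it with that property. So if the claim failed, `⟨β, α_f∨⟩` would be nonpositive
whenever `f` is such a heavy index of a short root below `β`. This forces the dominant short root
of `Φ` to lie below `β`, contrary to assumption. With a double bond, either the sum of the simple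
roots is already dominant, or these inequalities are a convexity condition that makes the
coefficients of `β` large. In the simply laced case they leave positive pairings of `β` only where
a maximal short root below `β` has coefficient one, and the height bound makes that root dominant.
-/

lemma cpair_mul_inner_self {x α : E} (hα : α ≠ 0) : cpair x α * ⟪α, α⟫ = 2 * ⟪x, α⟫ := by
  rw [cpair, div_mul_cancel₀ _ (inner_self_ne_zero.2 hα)]

lemma cpair_self {α : E} (hα : α ≠ 0) : cpair α α = 2 := by
  rw [cpair, mul_div_cancel_right₀ _ (inner_self_ne_zero.2 hα)]

lemma inner_wrefl_wrefl {α : E} (hα : α ≠ 0) (x y : E) : ⟪wrefl α x, wrefl α y⟫ = ⟪x, y⟫ := by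
  have hx := cpair_mul_inner_self (x := x) hα
  have hy := cpair_mul_inner_self (x := y) hα
  simp only [wrefl, inner_sub_left, inner_sub_right, real_inner_smul_left, real_inner_smul_right]
  rw [real_inner_comm y α]
  linear_combination (cpair x α * hy + cpair y α * hx) / 2

lemma wrefl_wrefl {α : E} (hα : α ≠ 0) (x : E) : wrefl α (wrefl α x) = x := by
  have hneg : cpair (wrefl α x) α = -cpair x α := by
    apply mul_right_cancel₀ (inner_self_ne_zero.2 hα)
    rw [cpair_mul_inner_self hα, wrefl, inner_sub_left, real_inner_smul_left]
    linear_combination -cpair_mul_inner_self (x := x) hα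
  rw [wrefl, hneg, wrefl]
  simp

lemma cpair_smul (t : ℝ) (x α : E) : cpair (t • x) α = t * cpair x α := by
  rw [cpair, cpair, real_inner_smul_left]
  ring

lemma cpair_sub (x y α : E) : cpair (x - y) α = cpair x α - cpair y α := by
  rw [cpair, cpair, cpair, inner_sub_left]
  ring

lemma cpair_wrefl_right {α : E} (hα : α ≠ 0) (x y : E) :
    cpair x (wrefl α y) = cpair (wrefl α x) y := by
  rw [cpair, cpair, inner_wrefl_wrefl hα, ← inner_wrefl_wrefl hα x, wrefl_wrefl hα]

lemma cpair_neg_right (x α : E) : cpair x (-α) = -cpair x α := by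
  rw [cpair, cpair, inner_neg_neg, inner_neg_right]
  ring

namespace RootSystemData

section Lattice

variable (R : RootSystemData ℓ E)

/-- The integer Cartan matrix `⟨αᵢ, αⱼ∨⟩`. -/
def cartan (i j : Fin ℓ) : ℤ :=
  Classical.choose (R.cpair_int (R.simple j) (R.simple_mem j) (R.simple i) (R.simple_mem i))

/-- The squared length `(αᵢ, αᵢ)` of a simple root. -/
def sqLen (i : Fin ℓ) : ℝ := ⟪R.simple i, R.simple i⟫

/-- The element `∑ cᵢ αᵢ` of the positive cone of the root lattice. -/
def vec (c : Fin ℓ → ℕ) : E := ∑ i, (c i : ℝ) • R.simple i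

/-- The pairing `⟨∑ cⱼ αⱼ, αᵢ∨⟩`, as an integer. -/
def pairing (c : Fin ℓ → ℕ) (i : Fin ℓ) : ℤ := ∑ j, (c j : ℤ) * R.cartan j i

lemma cpair_simple (i j : Fin ℓ) : cpair (R.simple i) (R.simple j) = R.cartan i j :=
  Classical.choose_spec
    (R.cpair_int (R.simple j) (R.simple_mem j) (R.simple i) (R.simple_mem i))

lemma simple_ne_zero (i : Fin ℓ) : R.simple i ≠ 0 := R.root_ne_zero _ (R.simple_mem i)

lemma sqLen_pos (i : Fin ℓ) : 0 < R.sqLen i := real_inner_self_pos.2 (R.simple_ne_zero i)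

lemma inner_simple_self (i : Fin ℓ) : ⟪R.simple i, R.simple i⟫ = R.sqLen i := rfl

lemma two_inner_simple (i j : Fin ℓ) :
    2 * ⟪R.simple i, R.simple j⟫ = R.cartan i j * R.sqLen j := by
  rw [← cpair_simple, sqLen, cpair_mul_inner_self (R.simple_ne_zero j)]

lemma cartan_mul_sqLen_comm (i j : Fin ℓ) :
    R.cartan i j * R.sqLen j = R.cartan j i * R.sqLen i := by
  rw [← two_inner_simple, ← two_inner_simple, real_inner_comm]

lemma cartan_self (i : Fin ℓ) : R.cartan i i = 2 := by
  exact_mod_cast (R.cpair_simple i i).symm.trans (cpair_self (R.simple_ne_zero i))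

lemma cartan_eq_zero_iff_inner {i j : Fin ℓ} :
    R.cartan i j = 0 ↔ ⟪R.simple i, R.simple j⟫ = 0 := by
  rw [← Int.cast_eq_zero (α := ℝ), ← mul_eq_zero_iff_right (R.sqLen_pos j).ne',
    ← two_inner_simple, mul_eq_zero_iff_left two_ne_zero]

lemma cartan_eq_zero_comm {i j : Fin ℓ} : R.cartan i j = 0 ↔ R.cartan j i = 0 := by
  rw [cartan_eq_zero_iff_inner, cartan_eq_zero_iff_inner, real_inner_comm]

lemma coeff_injective {g h : Fin ℓ → ℝ}
    (hgh : ∑ i, g i • R.simple i = ∑ i, h i • R.simple i) : g = h :=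
  R.simple_indep.fintypeLinearCombination_injective hgh

lemma vec_injective : Function.Injective R.vec := fun _ _ h =>
  funext fun i => Nat.cast_injective (R := ℝ) (congrFun (R.coeff_injective h) i)

lemma vec_zero : R.vec 0 = 0 := by simp [vec]

lemma vec_add (c d : Fin ℓ → ℕ) : R.vec (c + d) = R.vec c + R.vec d := by
  simp [vec, add_smul, Finset.sum_add_distrib]

lemma vec_single (j : Fin ℓ) : R.vec (Pi.single j 1) = R.simple j := by
  simp [vec, Pi.single_apply, ite_smul]

lemma vec_ne_zero {c : Fin ℓ → ℕ} (hc : c ≠ 0) : R.vec c ≠ 0 :=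
  fun h => hc (R.vec_injective (h.trans R.vec_zero.symm))

lemma wle_vec_of_le {c d : Fin ℓ → ℕ} (h : c ≤ d) : R.wle (R.vec c) (R.vec d) := by
  refine ⟨d - c, ?_⟩
  rw [sub_eq_iff_eq_add']
  exact (congrArg R.vec (add_tsub_cancel_of_le h)).symm.trans (R.vec_add _ _)

lemma pairing_add (c d : Fin ℓ → ℕ) (i : Fin ℓ) :
    R.pairing (c + d) i = R.pairing c i + R.pairing d i := by
  simp [pairing, add_mul, Finset.sum_add_distrib]

lemma pairing_single (j i : Fin ℓ) : R.pairing (Pi.single j 1) i = R.cartan j i := by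
  simp [pairing, Pi.single_apply, ite_mul]

lemma inner_vec_right (x : E) (c : Fin ℓ → ℕ) :
    ⟪x, R.vec c⟫ = ∑ i, (c i : ℝ) * ⟪x, R.simple i⟫ := by
  simp only [vec, inner_sum, real_inner_smul_right]

lemma two_inner_vec_simple (c : Fin ℓ → ℕ) (i : Fin ℓ) :
    2 * ⟪R.vec c, R.simple i⟫ = R.pairing c i * R.sqLen i := by
  rw [real_inner_comm, inner_vec_right, pairing, Int.cast_sum, Finset.mul_sum, Finset.sum_mul]
  refine Finset.sum_congr rfl fun j _ => ?_
  push_cast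
  rw [real_inner_comm]
  linear_combination (c j : ℝ) * R.two_inner_simple j i

lemma cpair_vec (c : Fin ℓ → ℕ) (i : Fin ℓ) : cpair (R.vec c) (R.simple i) = R.pairing c i := by
  apply mul_right_cancel₀ (R.sqLen_pos i).ne'
  rw [← two_inner_vec_simple, sqLen, cpair_mul_inner_self (R.simple_ne_zero i)]

lemma two_inner_vec_vec (c d : Fin ℓ → ℕ) :
    2 * ⟪R.vec c, R.vec d⟫ = ∑ i, d i * (R.pairing c i * R.sqLen i) := by
  simp only [inner_vec_right, Finset.mul_sum, ← two_inner_vec_simple]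
  exact Finset.sum_congr rfl fun i _ => by ring

lemma pairing_pos_iff {c : Fin ℓ → ℕ} {i : Fin ℓ} :
    0 < R.pairing c i ↔ 0 < ⟪R.vec c, R.simple i⟫ := by
  rw [← mul_pos_iff_of_pos_left (two_pos (α := ℝ)), two_inner_vec_simple,
    mul_pos_iff_of_pos_right (R.sqLen_pos i), Int.cast_pos]

lemma exists_pairing_pos {c : Fin ℓ → ℕ} (hc : c ≠ 0) : ∃ i, c i ≠ 0 ∧ 0 < R.pairing c i := by
  by_contra! h
  refine (real_inner_self_pos.2 (R.vec_ne_zero hc)).not_ge ?_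
  rw [inner_vec_right]
  refine Finset.sum_nonpos fun i _ => ?_
  rcases eq_or_ne (c i) 0 with h0 | h0
  · simp [h0]
  · exact mul_nonpos_of_nonneg_of_nonpos (Nat.cast_nonneg _)
      (not_lt.1 fun hi => (h i h0).not_gt (R.pairing_pos_iff.2 hi))

end Lattice

section Roots

variable {R : RootSystemData ℓ E}

lemma neg_mem_roots {γ : E} (hγ : γ ∈ R.roots) : -γ ∈ R.roots := by
  have h := R.reflect_mem γ hγ γ hγ
  rwa [wrefl, cpair_self (R.root_ne_zero γ hγ), two_smul, sub_add_cancel_left] at h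

lemma eq_vec_or_eq_neg_vec {γ : E} (hγ : γ ∈ R.roots) :
    (∃ c, γ = R.vec c) ∨ ∃ c, γ = -R.vec c :=
  R.root_decomp γ hγ

lemma eq_one_of_smul_mem_roots {α : E} (hα : α ∈ R.roots) {k : ℕ} (hk : (k : ℝ) • α ∈ R.roots) :
    k = 1 := by
  have hα0 := inner_self_ne_zero (𝕜 := ℝ).2 (R.root_ne_zero α hα)
  have hk0 : (k : ℝ) ≠ 0 := fun h => R.root_ne_zero _ hk (by rw [h, zero_smul])
  obtain ⟨m, hm⟩ := R.cpair_int _ hk α hα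
  have hkm : (m : ℝ) * k = 2 := by
    rw [← hm, cpair, real_inner_smul_right, real_inner_smul_left, real_inner_smul_right]
    field_simp
  have hdvd : k ∣ 2 := by
    exact_mod_cast (Dvd.intro_left m (by exact_mod_cast hkm) : (k : ℤ) ∣ 2)
  refine ((Nat.dvd_prime Nat.prime_two).1 hdvd).resolve_right ?_
  rintro rfl
  exact R.reduced α hα hk

lemma exists_vec_eq_wrefl {c : Fin ℓ → ℕ} {i : Fin ℓ} (hc : R.vec c ∈ R.roots)
    (hci : R.vec c ≠ R.simple i) :
    ∃ d, wrefl (R.simple i) (R.vec c) = R.vec d ∧ (∀ j ≠ i, d j = c j) ∧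
      (d i : ℤ) = c i - R.pairing c i := by
  have hsum : wrefl (R.simple i) (R.vec c) =
      ∑ j, ((c j : ℝ) - R.pairing c i * (Pi.single i 1 : Fin ℓ → ℝ) j) • R.simple j := by
    rw [wrefl, cpair_vec]
    simp [vec, sub_smul, Finset.sum_sub_distrib, Pi.single_apply, ite_smul]
  rcases eq_vec_or_eq_neg_vec (R.reflect_mem _ (R.simple_mem i) _ hc) with ⟨d, hd⟩ | ⟨d, hd⟩
  · have hcoeff := fun j => congrFun (R.coeff_injective (hsum.symm.trans hd)) j
    refine ⟨d, hd, fun j hj => ?_, ?_⟩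
    · have := hcoeff j
      simp only [Pi.single_eq_of_ne hj, mul_zero, sub_zero] at this
      exact_mod_cast this.symm
    · have := hcoeff i
      simp only [Pi.single_eq_same, mul_one] at this
      exact_mod_cast this.symm
  · have hneg : -R.vec d = ∑ j, (-(d j : ℝ)) • R.simple j := by simp [vec]
    have hc0 : ∀ j ≠ i, c j = 0 := fun j hj => by
      have := congrFun (R.coeff_injective (hsum.symm.trans (hd.trans hneg))) j
      simp only [Pi.single_eq_of_ne hj, mul_zero, sub_zero] at this
      have hd0 : (0 : ℝ) ≤ d j := Nat.cast_nonneg _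
      have : (c j : ℝ) ≤ 0 := by linarith only [this, hd0]
      exact_mod_cast this.antisymm (Nat.cast_nonneg _)
    have hmul : R.vec c = (c i : ℝ) • R.simple i :=
      Finset.sum_eq_single i (fun j _ hj => by rw [hc0 j hj, Nat.cast_zero, zero_smul]) (by simp)
    have hone := eq_one_of_smul_mem_roots (R.simple_mem i) (hmul ▸ hc)
    exact absurd (by rw [hmul, hone, Nat.cast_one, one_smul]) hci

/-- Every root is reached from the simple roots by negation and simple reflections: a positive
root pairing positively with a simple coroot is the reflection of a positive root of lower
height. -/
theorem root_induction {P : E → Prop} (simple : ∀ i, P (R.simple i))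
    (neg : ∀ γ, P γ → P (-γ)) (reflect : ∀ i γ, P γ → P (wrefl (R.simple i) γ)) {γ : E}
    (hγ : γ ∈ R.roots) : P γ := by
  have positive : ∀ n : ℕ, ∀ c : Fin ℓ → ℕ, ∑ i, c i = n → R.vec c ∈ R.roots → P (R.vec c) := by
    intro n
    induction n using Nat.strong_induction_on with
    | _ n ih =>
      intro c hcn hc
      have hc0 : c ≠ 0 := by
        rintro rfl
        exact R.root_ne_zero _ hc R.vec_zero
      obtain ⟨i, -, hi⟩ := R.exists_pairing_pos hc0
      by_cases hci : R.vec c = R.simple i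
      · exact hci ▸ simple i
      obtain ⟨d, hd, hdj, hdi⟩ := exists_vec_eq_wrefl hc hci
      have hlt : ∑ j, d j < n := by
        rw [← hcn]
        refine Finset.sum_lt_sum (fun j _ => ?_) ⟨i, Finset.mem_univ i, by omega⟩
        rcases eq_or_ne j i with rfl | hj
        · omega
        · exact (hdj j hj).le
      have hPd := ih _ hlt d rfl (hd ▸ R.reflect_mem _ (R.simple_mem i) _ hc)
      rw [← wrefl_wrefl (R.simple_ne_zero i) (R.vec c), hd]
      exact reflect i _ hPd
  rcases eq_vec_or_eq_neg_vec hγ with ⟨c, rfl⟩ | ⟨c, rfl⟩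
  · exact positive _ c rfl hγ
  · exact neg _ (positive _ c rfl (by simpa using neg_mem_roots hγ))

lemma exists_inner_self_eq_sqLen {γ : E} (hγ : γ ∈ R.roots) : ∃ i, ⟪γ, γ⟫ = R.sqLen i := by
  refine root_induction (P := fun γ => ∃ i, ⟪γ, γ⟫ = R.sqLen i) (fun i => ⟨i, rfl⟩)
    (fun γ h => ?_) (fun i γ h => ?_) hγ
  · rwa [inner_neg_neg]
  · rwa [inner_wrefl_wrefl (R.simple_ne_zero i)]

lemma isIntegral_of_simple {x : E} (hx : ∀ i, ∃ n : ℤ, cpair x (R.simple i) = n) :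
    R.IsIntegral x := by
  intro γ hγ
  refine root_induction
    (P := fun γ => ∀ y, (∀ i, ∃ n : ℤ, cpair y (R.simple i) = n) → ∃ n : ℤ, cpair y γ = n)
    (fun i y hy => hy i) (fun γ h y hy => ?_) (fun i γ h y hy => ?_) hγ x hx
  · obtain ⟨n, hn⟩ := h y hy
    exact ⟨-n, by rw [cpair_neg_right, hn, Int.cast_neg]⟩
  · rw [cpair_wrefl_right (R.simple_ne_zero i)]
    refine h _ fun j => ?_
    obtain ⟨m, hm⟩ := hy i
    obtain ⟨n, hn⟩ := hy j
    exact ⟨n - m * R.cartan i j, by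
      rw [wrefl, cpair_sub, cpair_smul, cpair_simple, hn, hm]; push_cast; ring⟩

lemma cartan_nonpos {i j : Fin ℓ} (hij : i ≠ j) : R.cartan i j ≤ 0 := by
  have hne : R.vec (Pi.single i 1) ≠ R.simple j := by
    rw [vec_single]
    exact fun h => hij (R.simple_indep.injective h)
  obtain ⟨d, -, -, hd⟩ := exists_vec_eq_wrefl (by rw [vec_single]; exact R.simple_mem i) hne
  rw [pairing_single, Pi.single_eq_of_ne hij.symm] at hd
  omega

lemma exists_cartan_neg {P : Fin ℓ → Prop} {i j : Fin ℓ} (hi : P i) (hj : ¬ P j) :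
    ∃ k l, P k ∧ ¬ P l ∧ R.cartan k l < 0 := by
  classical
  by_contra! h
  have huniv := R.irred {k | P k} ⟨i, by simpa using hi⟩ fun k hk l hl => ?_
  · exact hj (by simpa using huniv.ge (Finset.mem_univ j))
  simp only [Finset.mem_filter, Finset.mem_univ, true_and] at hk hl
  refine R.cartan_eq_zero_iff_inner.1 ((cartan_nonpos ?_).antisymm (h k l hk hl))
  rintro rfl
  exact hl hk

lemma cartan_mul_cartan_lt_four {i j : Fin ℓ} (hij : i ≠ j) :
    R.cartan i j * R.cartan j i < 4 := by
  have hindep := R.simple_indep.comp ![i, j] (by simpa [Function.Injective] using ⟨hij, hij.symm⟩)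
  have hne : (2 : ℝ) • R.simple i - (R.cartan i j : ℝ) • R.simple j ≠ 0 := fun h => by
    have := Fintype.linearIndependent_iff.1 hindep ![2, -R.cartan i j]
      (by simpa [Fin.sum_univ_two, sub_eq_add_neg] using h) 0
    simp at this
  have hpos := real_inner_self_pos.2 hne
  rw [real_inner_sub_sub_self] at hpos
  simp only [real_inner_smul_left, real_inner_smul_right] at hpos
  have hlin := R.two_inner_simple i j
  have hcomm := R.cartan_mul_sqLen_comm i j
  have hmul : (0 : ℝ) < (4 - R.cartan i j * R.cartan j i) * R.sqLen i := by
    unfold sqLen at *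
    linear_combination hpos - 2 * (R.cartan i j : ℝ) * hlin - R.cartan i j * hcomm
  have := pos_of_mul_pos_left hmul (R.sqLen_pos i).le
  exact_mod_cast sub_pos.1 this

/-- `R` is not of type G₂. -/
def NoTripleBond (R : RootSystemData ℓ E) : Prop :=
  ∀ i j : Fin ℓ, cpair (R.simple i) (R.simple j) ≠ -3

lemma cartan_cases (hG2 : R.NoTripleBond) {i j : Fin ℓ}
    (hij : i ≠ j) :
    (R.cartan i j = 0 ∧ R.cartan j i = 0) ∨ (R.cartan i j = -1 ∧ R.cartan j i = -1) ∨
      (R.cartan i j = -1 ∧ R.cartan j i = -2) ∨ (R.cartan i j = -2 ∧ R.cartan j i = -1) := by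
  have hne3 : ∀ i j, R.cartan i j ≠ -3 := fun i j h =>
    hG2 i j (by rw [cpair_simple, h]; norm_num)
  have hij0 := cartan_nonpos (R := R) hij
  have hji0 := cartan_nonpos (R := R) hij.symm
  have hlt := cartan_mul_cartan_lt_four (R := R) hij
  have hzero := R.cartan_eq_zero_comm (i := i) (j := j)
  have hij3 := hne3 i j
  have hji3 := hne3 j i
  generalize R.cartan i j = x at *
  generalize R.cartan j i = y at *
  rcases hij0.eq_or_lt with rfl | hx
  · simp_all
  have hy : y < 0 := hji0.lt_of_ne fun h => hx.ne (hzero.2 h)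
  have : -3 ≤ x := by nlinarith
  have : -3 ≤ y := by nlinarith
  interval_cases x <;> interval_cases y <;> simp_all

end Roots

/-- Roots of minimal length in the whole root system. If all roots have the same length, every
root is short. -/
def IsShortRoot (R : RootSystemData ℓ E) (γ : E) : Prop :=
  γ ∈ R.roots ∧ ∀ δ ∈ R.roots, ⟪γ, γ⟫ ≤ ⟪δ, δ⟫

section ShortRoots

variable {R : RootSystemData ℓ E} {c : Fin ℓ → ℕ} {i j : Fin ℓ}

lemma IsShortRoot.of_inner_self_le {γ δ : E} (hγ : R.IsShortRoot γ) (hδ : δ ∈ R.roots)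
    (h : ⟪δ, δ⟫ ≤ ⟪γ, γ⟫) : R.IsShortRoot δ :=
  ⟨hδ, fun x hx => h.trans (hγ.2 x hx)⟩

lemma IsShortRoot.inner_self_eq {γ δ : E} (hγ : R.IsShortRoot γ) (hδ : R.IsShortRoot δ) :
    ⟪γ, γ⟫ = ⟪δ, δ⟫ :=
  (hγ.2 _ hδ.1).antisymm (hδ.2 _ hγ.1)

lemma IsShortRoot.wrefl {γ α : E} (hγ : R.IsShortRoot γ) (hα : α ∈ R.roots) :
    R.IsShortRoot (wrefl α γ) :=
  hγ.of_inner_self_le (R.reflect_mem _ hα _ hγ.1)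
    (inner_wrefl_wrefl (R.root_ne_zero _ hα) γ γ).le

lemma IsShortRoot.le_sqLen {γ : E} (hγ : R.IsShortRoot γ) (i : Fin ℓ) : ⟪γ, γ⟫ ≤ R.sqLen i :=
  hγ.2 _ (R.simple_mem i)

lemma exists_isShortRoot_simple [Nonempty (Fin ℓ)] (R : RootSystemData ℓ E) :
    ∃ i, R.IsShortRoot (R.simple i) := by
  obtain ⟨i, hi⟩ := Finite.exists_min R.sqLen
  refine ⟨i, R.simple_mem i, fun δ hδ => ?_⟩
  obtain ⟨j, hj⟩ := exists_inner_self_eq_sqLen hδ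
  exact hj ▸ hi j

lemma IsShortRoot.ne_zero (hc : R.IsShortRoot (R.vec c)) : c ≠ 0 := by
  rintro rfl
  exact R.root_ne_zero _ hc.1 R.vec_zero

lemma IsShortRoot.neg_one_le_pairing (hc : R.IsShortRoot (R.vec c)) (i : Fin ℓ) :
    -1 ≤ R.pairing c i := by
  have hne : c + Pi.single i 1 ≠ 0 := fun h => by simpa using congrFun h i
  have hpos := real_inner_self_pos.2 (R.vec_ne_zero hne)
  rw [vec_add, vec_single, real_inner_add_add_self, two_inner_vec_simple, inner_simple_self] at hpos
  have hmul : (0 : ℝ) < (R.pairing c i + 2) * R.sqLen i := by linarith [hc.le_sqLen i]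
  have : 0 < R.pairing c i + 2 := by
    exact_mod_cast pos_of_mul_pos_left hmul (R.sqLen_pos i).le
  omega

lemma IsShortRoot.pairing_le_one (hc : R.IsShortRoot (R.vec c)) (hci : R.vec c ≠ R.simple i) :
    R.pairing c i ≤ 1 := by
  have hpos := real_inner_self_pos.2 (sub_ne_zero.2 hci)
  rw [real_inner_sub_sub_self, two_inner_vec_simple, inner_simple_self] at hpos
  have hmul : (0 : ℝ) < (2 - R.pairing c i) * R.sqLen i := by linarith [hc.le_sqLen i]
  have : 0 < 2 - R.pairing c i := by
    exact_mod_cast pos_of_mul_pos_left hmul (R.sqLen_pos i).le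
  omega

lemma IsShortRoot.add_single (hc : R.IsShortRoot (R.vec c)) (hi : R.pairing c i = -1) :
    R.IsShortRoot (R.vec (c + Pi.single i 1)) := by
  have h := hc.wrefl (R.simple_mem i)
  rwa [_root_.wrefl, cpair_vec, hi, Int.cast_neg, Int.cast_one, neg_one_smul, sub_neg_eq_add,
    ← R.vec_single i, ← vec_add] at h

lemma IsShortRoot.exists_eq_add_single (hc : R.IsShortRoot (R.vec c)) (hi : R.pairing c i = 1) :
    ∃ d, c = d + Pi.single i 1 ∧ R.IsShortRoot (R.vec d) := by
  have hci : R.vec c ≠ R.simple i := fun h => by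
    have := R.cpair_vec c i
    rw [h, cpair_self (R.simple_ne_zero i), hi] at this
    norm_num at this
  obtain ⟨d, hd, -⟩ := exists_vec_eq_wrefl hc.1 hci
  refine ⟨d, R.vec_injective ?_, hd ▸ hc.wrefl (R.simple_mem i)⟩
  rw [vec_add, ← hd, _root_.wrefl, cpair_vec, hi, Int.cast_one, one_smul, vec_single,
    sub_add_cancel]

/-- Otherwise `2γ + αᵢ + αⱼ` would have nonpositive square. -/
lemma IsShortRoot.eq_of_pairing_neg (hc : R.IsShortRoot (R.vec c))
    (hi : R.sqLen i = 2 * ⟪R.vec c, R.vec c⟫) (hj : R.sqLen j = 2 * ⟪R.vec c, R.vec c⟫)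
    (hci : R.pairing c i < 0) (hcj : R.pairing c j < 0) : i = j := by
  by_contra hij
  have hne : c + c + Pi.single i 1 + Pi.single j 1 ≠ 0 := fun h => by
    simpa using congrFun h j
  have hpos := real_inner_self_pos.2 (R.vec_ne_zero hne)
  rw [vec_add, real_inner_add_add_self, vec_add, real_inner_add_add_self, vec_add,
    real_inner_add_add_self] at hpos
  simp only [vec_single, inner_add_left, inner_simple_self] at hpos
  have hcij : (R.cartan i j : ℝ) ≤ 0 := by exact_mod_cast cartan_nonpos hij
  have hpi : R.pairing c i = -1 := by linarith [hc.neg_one_le_pairing i]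
  have hpj : R.pairing c j = -1 := by linarith [hc.neg_one_le_pairing j]
  have h1 := R.two_inner_vec_simple c i
  have h2 := R.two_inner_vec_simple c j
  have h3 := R.two_inner_simple i j
  have h4 := mul_nonpos_of_nonpos_of_nonneg hcij (R.sqLen_pos j).le
  rw [hpi] at h1
  rw [hpj] at h2
  push_cast at h1 h2
  linarith

lemma exists_isShortRoot_inner_ne_zero (R : RootSystemData ℓ E) (j : Fin ℓ) :
    ∃ γ, R.IsShortRoot γ ∧ ⟪γ, R.simple j⟫ ≠ 0 := by
  by_contra hj
  have : Nonempty (Fin ℓ) := ⟨j⟩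
  obtain ⟨i₀, hi₀⟩ := exists_isShortRoot_simple R
  obtain ⟨i, k, ⟨γ, hγ, hγi⟩, hk, hik⟩ := exists_cartan_neg (R := R)
    (P := fun j => ∃ γ, R.IsShortRoot γ ∧ ⟪γ, R.simple j⟫ ≠ 0) ⟨_, hi₀, (R.sqLen_pos i₀).ne'⟩ hj
  simp only [not_exists, not_and, not_not] at hk
  have hrefl := hk _ (hγ.wrefl (R.simple_mem i))
  rw [_root_.wrefl, inner_sub_left, hk γ hγ, real_inner_smul_left, zero_sub, neg_eq_zero,
    mul_eq_zero] at hrefl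
  have hzero : cpair γ (R.simple i) = 0 :=
    hrefl.resolve_right fun h => hik.ne (R.cartan_eq_zero_iff_inner.2 h)
  have := cpair_mul_inner_self (x := γ) (R.simple_ne_zero i)
  rw [hzero, zero_mul] at this
  exact hγi (by linarith)

/-- For a short root `γ` with `(γ, αⱼ) > 0`, this is `|2γ - αⱼ|² > 0`, which holds because `αⱼ` is
not twice a root. -/
lemma IsShortRoot.sqLen_lt_four_mul {γ : E} (hγ : R.IsShortRoot γ) (j : Fin ℓ) :
    R.sqLen j < 4 * ⟪γ, γ⟫ := by
  have key : ∀ δ, R.IsShortRoot δ → 0 < ⟪δ, R.simple j⟫ → R.sqLen j < 4 * ⟪δ, δ⟫ := by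
    intro δ hδ hpos
    have hne : (2 : ℝ) • δ - R.simple j ≠ 0 := fun h =>
      R.reduced δ hδ.1 (sub_eq_zero.1 h ▸ R.simple_mem j)
    have hsq := real_inner_self_pos.2 hne
    obtain ⟨n, hn⟩ := R.cpair_int _ (R.simple_mem j) _ hδ.1
    have hmul := cpair_mul_inner_self (x := δ) (R.simple_ne_zero j)
    rw [hn, inner_simple_self] at hmul
    have hn1 : (1 : ℝ) ≤ n := by
      have : (0 : ℝ) < n := pos_of_mul_pos_left (by rw [hmul]; linarith) (R.sqLen_pos j).le
      exact_mod_cast Int.cast_pos.1 this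
    rw [real_inner_sub_sub_self] at hsq
    simp only [real_inner_smul_left, real_inner_smul_right, inner_simple_self] at hsq
    nlinarith [R.sqLen_pos j]
  obtain ⟨δ, hδ, hne⟩ := exists_isShortRoot_inner_ne_zero R j
  rw [hγ.inner_self_eq hδ]
  rcases hne.lt_or_gt with h | h
  · rw [← inner_neg_neg]
    exact key _ (hδ.of_inner_self_le (neg_mem_roots hδ.1) (inner_neg_neg δ δ).le)
      (by rwa [inner_neg_left, neg_pos])
  · exact key δ hδ h

lemma IsShortRoot.sqLen_eq {γ : E} (hG2 : R.NoTripleBond) (hγ : R.IsShortRoot γ)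
    (j : Fin ℓ) : R.sqLen j = ⟪γ, γ⟫ ∨ R.sqLen j = 2 * ⟪γ, γ⟫ := by
  by_contra hj
  obtain ⟨q, hq⟩ := exists_inner_self_eq_sqLen hγ.1
  obtain ⟨i, k, hi, hk, hik⟩ := exists_cartan_neg (R := R)
    (P := fun j => R.sqLen j = ⟪γ, γ⟫ ∨ R.sqLen j = 2 * ⟪γ, γ⟫) (Or.inl hq.symm) hj
  obtain ⟨hk1, hk2⟩ := not_or.1 hk
  have hne : i ≠ k := by
    rintro rfl
    exact hk hi
  have hcomm := R.cartan_mul_sqLen_comm i k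
  have hle := hγ.le_sqLen k
  have hlt := hγ.sqLen_lt_four_mul k
  have hpos := real_inner_self_pos.2 (R.root_ne_zero _ hγ.1)
  rcases cartan_cases hG2 hne with h | h | h | h
  · exact hik.ne h.1
  all_goals
    rw [h.1, h.2] at hcomm
    push_cast at hcomm
    rcases hi with hi | hi
  · exact hk1 (by linarith)
  · exact hk2 (by linarith)
  · exact hk2 (by linarith)
  · linarith
  · linarith
  · exact hk1 (by linarith)

end ShortRoots

/-- The support of a coefficient vector. -/
def supp (c : Fin ℓ → ℕ) : Finset (Fin ℓ) := {i | c i ≠ 0}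

section Support

variable {R : RootSystemData ℓ E} {c : Fin ℓ → ℕ} {i j : Fin ℓ}

lemma mem_supp : i ∈ supp c ↔ c i ≠ 0 := by simp [supp]

lemma pairing_le_sum (s : Finset (Fin ℓ)) (hj : j ∉ s → c j = 0) :
    R.pairing c j ≤ ∑ i ∈ s, c i * R.cartan i j := by
  refine Finset.sum_le_sum_of_subset_of_nonpos' (Finset.subset_univ s) fun i _ hi => ?_
  rcases eq_or_ne i j with rfl | hij
  · simp [hj hi]
  · exact mul_nonpos_of_nonneg_of_nonpos (Int.natCast_nonneg _) (cartan_nonpos hij)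

lemma pairing_le_mul_cartan (hj : c j = 0) (i : Fin ℓ) : R.pairing c j ≤ c i * R.cartan i j := by
  simpa using pairing_le_sum {i} fun _ => hj

lemma pairing_le_two_mul (c : Fin ℓ → ℕ) (j : Fin ℓ) : R.pairing c j ≤ 2 * c j := by
  have h := pairing_le_sum (R := R) (c := c) (j := j) {j} (by simp)
  rwa [Finset.sum_singleton, cartan_self, mul_comm] at h

lemma pairing_nonpos (hj : c j = 0) : R.pairing c j ≤ 0 := by
  simpa [hj] using pairing_le_two_mul (R := R) c j

lemma exists_adjacent (hc : c ≠ 0) (hi : c i = 0) :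
    ∃ k z, c k ≠ 0 ∧ c z = 0 ∧ R.cartan k z < 0 ∧ R.pairing c z < 0 := by
  obtain ⟨j, hj⟩ := Function.ne_iff.1 hc
  obtain ⟨k, z, hk, hz, hkz⟩ := exists_cartan_neg (R := R) (P := fun i => c i ≠ 0) hj
    (not_not.2 hi)
  exact ⟨k, z, hk, not_not.1 hz, hkz, (pairing_le_mul_cartan (not_not.1 hz) k).trans_lt
    (mul_neg_of_pos_of_neg (by positivity) hkz)⟩

lemma ne_zero_of_pairing_nonneg (hc : c ≠ 0) (hdom : ∀ i, 0 ≤ R.pairing c i) (i : Fin ℓ) :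
    c i ≠ 0 := fun hi => by
  obtain ⟨-, z, -, -, -, hneg⟩ := exists_adjacent (R := R) hc hi
  exact (hdom z).not_gt hneg

lemma single_le_of_ne_zero (hi : c i ≠ 0) : Pi.single i 1 ≤ c := by
  intro k
  rcases eq_or_ne k i with rfl | hk
  · simpa using Nat.one_le_iff_ne_zero.2 hi
  · simp [hk]

end Support

section HighestShortRoot

variable {R : RootSystemData ℓ E} {c d : Fin ℓ → ℕ}

lemma IsShortRoot.exists_le_maximal {P : (Fin ℓ → ℕ) → Prop} (hc : R.IsShortRoot (R.vec c))
    (hPc : P c) : ∃ m, c ≤ m ∧ Maximal (fun d => R.IsShortRoot (R.vec d) ∧ P d) m := by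
  have hfin : {d | R.IsShortRoot (R.vec d) ∧ P d}.Finite :=
    (R.roots.finite_toSet.preimage R.vec_injective.injOn).subset fun _ hd => hd.1.1
  exact hfin.exists_le_maximal ⟨hc, hPc⟩

lemma inner_vec_nonneg (hcd : ∀ i, d i ≠ 0 → 0 ≤ R.pairing c i) : 0 ≤ ⟪R.vec c, R.vec d⟫ := by
  refine nonneg_of_mul_nonneg_right ?_ (two_pos (α := ℝ))
  rw [two_inner_vec_vec]
  refine Finset.sum_nonneg fun i _ => ?_
  rcases eq_or_ne (d i) 0 with hi | hi
  · simp [hi]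
  · have := R.sqLen_pos i
    have : (0 : ℝ) ≤ R.pairing c i := by exact_mod_cast hcd i hi
    positivity

lemma inner_vec_pos (hd : d ≠ 0) (hdc : ∀ i, d i ≠ 0 → c i ≠ 0)
    (hddom : ∀ i, c i ≠ 0 → 0 ≤ R.pairing d i) : 0 < ⟪R.vec d, R.vec c⟫ := by
  refine (inner_vec_nonneg hddom).lt_of_ne fun h0 => ?_
  obtain ⟨i, hi, hpi⟩ := R.exists_pairing_pos hd
  have hsum := R.two_inner_vec_vec d c
  rw [← h0, mul_zero] at hsum
  refine hsum.not_lt (Finset.sum_pos' (fun j _ => ?_) ⟨i, Finset.mem_univ i, ?_⟩)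
  · rcases eq_or_ne (c j) 0 with hj | hj
    · simp [hj]
    · have := R.sqLen_pos j
      have : (0 : ℝ) ≤ R.pairing d j := by exact_mod_cast hddom j hj
      positivity
  · have := R.sqLen_pos i
    have : (0 : ℝ) < R.pairing d i := by exact_mod_cast hpi
    have := Nat.pos_of_ne_zero (hdc i hi)
    positivity

lemma inner_self_vec_lt_add (hd : d ≠ 0) (hcd : ∀ i, d i ≠ 0 → 0 ≤ R.pairing c i) :
    ⟪R.vec c, R.vec c⟫ < ⟪R.vec (c + d), R.vec (c + d)⟫ := by
  have hpos := real_inner_self_pos.2 (R.vec_ne_zero hd)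
  rw [vec_add, real_inner_add_add_self]
  linarith [inner_vec_nonneg hcd]

lemma IsShortRoot.sub_mem_roots {γ δ : E} (hγ : R.IsShortRoot γ) (hδ : R.IsShortRoot δ)
    (hne : γ ≠ δ) (hpos : 0 < ⟪γ, δ⟫) : γ - δ ∈ R.roots := by
  have hδ0 := R.root_ne_zero _ hδ.1
  have hδδ := real_inner_self_pos.2 hδ0
  obtain ⟨n, hn⟩ := R.cpair_int _ hδ.1 _ hγ.1
  have hmul := cpair_mul_inner_self (x := γ) hδ0
  rw [hn] at hmul
  have hsq := real_inner_self_pos.2 (sub_ne_zero.2 hne)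
  rw [real_inner_sub_sub_self, hγ.inner_self_eq hδ] at hsq
  have hn0 : 0 < n := by
    have : (0 : ℝ) < n := pos_of_mul_pos_left (by rw [hmul]; linarith) hδδ.le
    exact_mod_cast this
  have hn2 : n < 2 := by
    have : (n : ℝ) < 2 := lt_of_mul_lt_mul_right (by linarith) hδδ.le
    exact_mod_cast this
  have hrefl := R.reflect_mem _ hδ.1 _ hγ.1
  rwa [_root_.wrefl, hn, show n = 1 by omega, Int.cast_one, one_smul] at hrefl

lemma IsShortRoot.eq_of_pairing_nonneg (hc : R.IsShortRoot (R.vec c))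
    (hd : R.IsShortRoot (R.vec d)) (hdc : ∀ i, d i ≠ 0 → c i ≠ 0)
    (hcdom : ∀ i, c i ≠ 0 → 0 ≤ R.pairing c i) (hddom : ∀ i, c i ≠ 0 → 0 ≤ R.pairing d i) :
    d = c := by
  by_contra hne
  have hpos := inner_vec_pos hd.ne_zero hdc hddom
  have hroot := hd.sub_mem_roots hc (fun h => hne (R.vec_injective h)) hpos
  have hlen := hd.inner_self_eq hc
  rcases eq_vec_or_eq_neg_vec hroot with ⟨g, hg⟩ | ⟨g, hg⟩
  · have hd_eq : d = c + g := R.vec_injective (by rw [vec_add, ← hg, add_sub_cancel])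
    have hg : g ≠ 0 := by
      rintro rfl
      exact hne (by rw [hd_eq, add_zero])
    refine (inner_self_vec_lt_add hg fun i hi => ?_).ne' (hd_eq ▸ hlen)
    exact hcdom i (hdc i (by simp [hd_eq, hi]))
  · have hc_eq : c = d + g :=
      R.vec_injective (by rw [vec_add, ← neg_eq_iff_eq_neg.2 hg]; abel)
    have hg : g ≠ 0 := by
      rintro rfl
      exact hne (by rw [hc_eq, add_zero])
    refine (inner_self_vec_lt_add hg fun i hi => ?_).ne (hc_eq ▸ hlen)
    exact hddom i (by simp [hc_eq, hi])

lemma IsShortRoot.isShortRootOf_supp (hc : R.IsShortRoot (R.vec c)) :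
    R.IsShortRootOf (supp c) (R.vec c) := by
  refine ⟨⟨hc.1, fun i => c i, fun i hi => mem_supp.2 (Nat.cast_ne_zero.1 hi), ?_⟩,
    fun γ hγ => hc.2 γ hγ.1⟩
  simp [vec]

theorem IsShortRoot.isHighestShortRoot (hc : R.IsShortRoot (R.vec c))
    (hdom : ∀ i, c i ≠ 0 → 0 ≤ R.pairing c i) : R.IsHighestShortRoot (supp c) (R.vec c) := by
  refine ⟨hc.isShortRootOf_supp, fun γ hγ => ?_⟩
  obtain ⟨⟨hγ_mem, g, hg, hγg⟩, hγ_le⟩ := hγ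
  have hγ_short := hc.of_inner_self_le hγ_mem (hγ_le _ hc.isShortRootOf_supp.1)
  rcases eq_vec_or_eq_neg_vec hγ_mem with ⟨e, rfl⟩ | ⟨e, rfl⟩
  · have hge := R.coeff_injective hγg
    have hec : ∀ i, e i ≠ 0 → c i ≠ 0 := fun i hi => mem_supp.1 (hg i fun h0 => hi (by
      have := congrFun hge i
      simp only [h0, Int.cast_zero] at this
      exact_mod_cast this))
    obtain ⟨m, hem, hm⟩ := hγ_short.exists_le_maximal (P := fun m => ∀ i, m i ≠ 0 → c i ≠ 0) hec
    obtain ⟨hm_short, hmc⟩ := hm.prop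
    suffices m = c from R.wle_vec_of_le (this ▸ hem)
    refine hc.eq_of_pairing_nonneg hm_short hmc hdom fun i hi => ?_
    by_contra! hneg
    have hadd := hm_short.add_single (i := i) (by linarith [hm_short.neg_one_le_pairing i])
    have hle := hm.le_of_ge ⟨hadd, fun j hj => ?_⟩ le_self_add i
    · simp at hle
    · rcases eq_or_ne j i with rfl | hji
      · exact hi
      · exact hmc j (by simpa [hji] using hj)
  · refine ⟨c + e, ?_⟩
    rw [sub_neg_eq_add]
    exact (R.vec_add c e).symm

end HighestShortRoot

/-- `vec c` is a short root of the system whose pairings with the simple coroots of its support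
are those of the fundamental weight `ω_f`. Then `vec c` is the highest short root of the
subsystem on `supp c`, and `f` is the index `f(supp c)`. -/
structure IsLocallyFundamental (R : RootSystemData ℓ E) (c : Fin ℓ → ℕ) (f : Fin ℓ) : Prop where
  isShortRoot : R.IsShortRoot (R.vec c)
  ne_zero : c f ≠ 0
  pairing_eq : ∀ i, c i ≠ 0 → R.pairing c i = if i = f then 1 else 0

section LocallyFundamental

variable {R : RootSystemData ℓ E} {c : Fin ℓ → ℕ} {f : Fin ℓ}

namespace IsLocallyFundamental

lemma two_inner_self (h : R.IsLocallyFundamental c f) :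
    2 * ⟪R.vec c, R.vec c⟫ = c f * R.sqLen f := by
  rw [two_inner_vec_vec, Finset.sum_eq_single f (fun i _ hif => ?_) (by simp),
    h.pairing_eq f h.ne_zero, if_pos rfl, Int.cast_one, one_mul]
  rcases eq_or_ne (c i) 0 with hi | hi
  · simp [hi]
  · simp [h.pairing_eq i hi, hif]

lemma pairing_nonneg (h : R.IsLocallyFundamental c f) (i : Fin ℓ) (hi : c i ≠ 0) :
    0 ≤ R.pairing c i := by
  rw [h.pairing_eq i hi]
  split_ifs <;> decide

lemma isHighestShortRoot (h : R.IsLocallyFundamental c f) :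
    R.IsHighestShortRoot (supp c) (R.vec c) :=
  h.isShortRoot.isHighestShortRoot h.pairing_nonneg

/-- The part of `vec c` on an orthogonal piece of the support without `f` would be orthogonal to
itself. -/
lemma mem_of_orthogonal (h : R.IsLocallyFundamental c f) {S : Finset (Fin ℓ)}
    (hS : S ⊆ supp c) (hne : S.Nonempty)
    (horth : ∀ i ∈ S, ∀ j ∈ supp c, j ∉ S → ⟪R.simple i, R.simple j⟫ = 0) : f ∈ S := by
  classical
  by_contra hf
  let d : Fin ℓ → ℕ := fun i => if i ∈ S then c i else 0
  have hd0 : d ≠ 0 := by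
    obtain ⟨i, hi⟩ := hne
    exact Function.ne_iff.2 ⟨i, by simpa [d, hi] using mem_supp.1 (hS hi)⟩
  obtain ⟨i, hi, hpos⟩ := R.exists_pairing_pos hd0
  have hiS : i ∈ S := by
    by_contra hiS
    simp [d, hiS] at hi
  have heq : R.pairing d i = R.pairing c i := by
    refine Finset.sum_congr rfl fun j _ => ?_
    by_cases hjS : j ∈ S
    · simp [d, hjS]
    by_cases hj : c j = 0
    · simp [d, hjS, hj]
    · rw [R.cartan_eq_zero_comm.1 (R.cartan_eq_zero_iff_inner.2
        (horth i hiS j (mem_supp.2 hj) hjS)), mul_zero, mul_zero]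
  rw [heq, h.pairing_eq i (mem_supp.1 (hS hiS)), if_neg (ne_of_mem_of_not_mem hiS hf)] at hpos
  exact hpos.false

lemma connected (h : R.IsLocallyFundamental c f) : R.Connected (supp c) := by
  classical
  refine ⟨⟨f, mem_supp.2 h.ne_zero⟩, fun S hS hne horth => hS.antisymm ?_⟩
  rw [← Finset.sdiff_eq_empty_iff_subset, ← Finset.not_nonempty_iff_eq_empty]
  intro hne'
  refine (Finset.mem_sdiff.1 (h.mem_of_orthogonal Finset.sdiff_subset hne' ?_)).2
    (h.mem_of_orthogonal hS hne horth)
  intro i hi j hj hji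
  obtain ⟨hic, hiS⟩ := Finset.mem_sdiff.1 hi
  have hjS : j ∈ S := by simpa [hj] using hji
  rw [real_inner_comm]
  exact horth j hjS i hic hiS

lemma sum_supp_pairing (h : R.IsLocallyFundamental c f) : ∑ i ∈ supp c, R.pairing c i = 1 := by
  rw [Finset.sum_congr rfl fun i hi => h.pairing_eq i (mem_supp.1 hi), Finset.sum_ite_eq',
    if_pos (mem_supp.2 h.ne_zero)]

end IsLocallyFundamental

lemma le_sum_cartan_typeA {n : ℕ} (b : Fin (n + 1)) :
    (if b = 0 then 1 else 0) + (if b = Fin.last n then 1 else 0) ≤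
      ∑ a : Fin (n + 1), (if a = b then (2 : ℤ)
        else if (a : ℕ) + 1 = (b : ℕ) ∨ (b : ℕ) + 1 = (a : ℕ) then -1 else 0) := by
  have hpred : ∑ a : Fin (n + 1), (if (a : ℕ) + 1 = b then (1 : ℤ) else 0) =
      1 - if b = 0 then 1 else 0 := by
    cases b using Fin.cases with
    | zero => simp
    | succ i =>
      have heq (a : Fin (n + 1)) : (a : ℕ) + 1 = i.succ ↔ a = i.castSucc := by simp [Fin.ext_iff]
      simp only [heq, Finset.sum_ite_eq', Finset.mem_univ, if_true, Fin.succ_ne_zero, if_false,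
        sub_zero]
  have hsucc : ∑ a : Fin (n + 1), (if (b : ℕ) + 1 = a then (1 : ℤ) else 0) =
      1 - if b = Fin.last n then 1 else 0 := by
    cases b using Fin.lastCases with
    | last => simpa using fun a : Fin (n + 1) => a.isLt.ne'
    | cast i =>
      have heq (a : Fin (n + 1)) : (i.castSucc : ℕ) + 1 = a ↔ a = i.succ := by
        simp [Fin.ext_iff, eq_comm]
      simp only [heq, Finset.sum_ite_eq', Finset.mem_univ, if_true, Fin.castSucc_ne_last, if_false,
        sub_zero]
  have hsplit : ∀ a : Fin (n + 1), (if a = b then (2 : ℤ)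
      else if (a : ℕ) + 1 = (b : ℕ) ∨ (b : ℕ) + 1 = (a : ℕ) then -1 else 0) =
      (if a = b then 2 else 0) - (if (a : ℕ) + 1 = b then 1 else 0) -
        if (b : ℕ) + 1 = a then 1 else 0 := by
    intro a
    simp only [Fin.ext_iff]
    split_ifs <;> omega
  simp only [hsplit, Finset.sum_sub_distrib, Finset.sum_ite_eq', Finset.mem_univ, if_true]
  linarith

namespace IsLocallyFundamental

/-- On a chain of type A with ends `a` and `z`, the pairings of `vec c` add up to `c a + c z`. -/
lemma not_isTypeASub (h : R.IsLocallyFundamental c f) : ¬ R.IsTypeASub (supp c) := by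
  rintro ⟨e, he⟩
  have hcard := Finset.card_pos.2 ⟨f, mem_supp.2 h.ne_zero⟩
  generalize (supp c).card = m at e he hcard
  obtain ⟨n, rfl⟩ := Nat.exists_eq_succ_of_ne_zero hcard.ne'
  have hsum (g : Fin ℓ → ℤ) : ∑ i ∈ supp c, g i = ∑ a, g (e a) := by
    rw [e.sum_comp fun i => g i, Finset.sum_coe_sort]
  have hpairing (i : Fin ℓ) : R.pairing c i = ∑ b, (c (e b) : ℤ) * R.cartan (e b) i := by
    rw [← hsum fun j => c j * R.cartan j i, pairing]
    refine (Finset.sum_subset (Finset.subset_univ _) fun j _ hj => ?_).symm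
    rw [not_not.1 (mt mem_supp.2 hj), Nat.cast_zero, zero_mul]
  have hcartan (a b : Fin (n + 1)) : R.cartan (e b) (e a) = if a = b then (2 : ℤ)
      else if (a : ℕ) + 1 = (b : ℕ) ∨ (b : ℕ) + 1 = (a : ℕ) then -1 else 0 := by
    have := he a b
    rw [cpair_simple] at this
    exact_mod_cast this
  have hends : (c (e 0) : ℤ) + c (e (Fin.last n)) ≤ 1 := calc
    (c (e 0) : ℤ) + c (e (Fin.last n)) = ∑ b, (c (e b) : ℤ) *
        ((if b = 0 then 1 else 0) + if b = Fin.last n then 1 else 0) := by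
      simp [mul_add, Finset.sum_add_distrib]
    _ ≤ ∑ b, (c (e b) : ℤ) * ∑ a, R.cartan (e b) (e a) := by
      refine Finset.sum_le_sum fun b _ => mul_le_mul_of_nonneg_left ?_ (Nat.cast_nonneg _)
      simpa only [hcartan] using le_sum_cartan_typeA b
    _ = ∑ i ∈ supp c, R.pairing c i := by
      simp_rw [hsum, hpairing, Finset.mul_sum]
      exact Finset.sum_comm
    _ = 1 := h.sum_supp_pairing
  have h0 := mem_supp.1 (e 0).2
  have hlast := mem_supp.1 (e (Fin.last n)).2
  omega

lemma isDominant_sub (h : R.IsLocallyFundamental c f) {w : E}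
    (hw : ∀ i, cpair w (R.simple i) = if i = f then 1 else 0) :
    R.IsDominant (w - R.vec c) ∧ ∀ i ∈ supp c, cpair (w - R.vec c) (R.simple i) = 0 := by
  have hpair (i : Fin ℓ) : cpair (w - R.vec c) (R.simple i) =
      (((if i = f then 1 else 0) - R.pairing c i : ℤ) : ℝ) := by
    rw [cpair_sub, hw, cpair_vec]
    push_cast
    rfl
  have hsupp : ∀ i ∈ supp c, cpair (w - R.vec c) (R.simple i) = 0 := fun i hi => by
    rw [hpair, h.pairing_eq i (mem_supp.1 hi), sub_self, Int.cast_zero]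
  refine ⟨⟨isIntegral_of_simple fun i => ⟨_, hpair i⟩, fun i => ?_⟩, hsupp⟩
  by_cases hi : c i = 0
  · rw [hpair, Int.cast_nonneg_iff]
    have := R.pairing_nonpos hi
    split_ifs <;> omega
  · exact (hsupp i (mem_supp.2 hi)).ge

end IsLocallyFundamental

lemma IsShortRoot.pairing_le_one_of_two_mul_le (hc : R.IsShortRoot (R.vec c))
    (hf : 2 * ⟪R.vec c, R.vec c⟫ ≤ c f * R.sqLen f) (k : Fin ℓ) : R.pairing c k ≤ 1 := by
  refine hc.pairing_le_one fun h => ?_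
  have hcf := congrFun (R.vec_injective (h.trans (R.vec_single k).symm)) f
  have hpos := R.sqLen_pos k
  rw [h, inner_simple_self] at hf
  rcases eq_or_ne f k with rfl | hfk
  · rw [hcf, Pi.single_eq_same, Nat.cast_one] at hf
    linarith
  · rw [hcf, Pi.single_eq_of_ne hfk, Nat.cast_zero, zero_mul] at hf
    linarith

/-- In `2(γ, γ) = ∑ γ_k ⟨γ, α_k∨⟩ |α_k|²` the summand at `f` is at most `2(γ, γ)` and the others
are nonpositive. -/
lemma IsShortRoot.isLocallyFundamental (hc : R.IsShortRoot (R.vec c))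
    (hf : c f * R.sqLen f = 2 * ⟪R.vec c, R.vec c⟫) (hneg : ∀ k ≠ f, R.pairing c k ≤ 0) :
    R.IsLocallyFundamental c f := by
  have hs := real_inner_self_pos.2 (R.vec_ne_zero hc.ne_zero)
  have hcf : c f ≠ 0 := fun h => by
    rw [h, Nat.cast_zero, zero_mul] at hf
    linarith
  have hle := hc.pairing_le_one_of_two_mul_le hf.ge f
  have hterm : ∀ k ∈ Finset.univ.erase f, (c k : ℝ) * (R.pairing c k * R.sqLen k) ≤ 0 :=
    fun k hk => mul_nonpos_of_nonneg_of_nonpos (Nat.cast_nonneg _)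
      (mul_nonpos_of_nonpos_of_nonneg (Int.cast_nonpos.2 (hneg k (Finset.ne_of_mem_erase hk)))
        (R.sqLen_pos k).le)
  have hsum := R.two_inner_vec_vec c c
  rw [← Finset.add_sum_erase _ _ (Finset.mem_univ f), mul_left_comm, hf] at hsum
  have hrest := Finset.sum_nonpos hterm
  have hone : R.pairing c f = 1 := by
    have : (0 : ℝ) < R.pairing c f :=
      pos_of_mul_pos_left (b := 2 * ⟪R.vec c, R.vec c⟫) (by linarith) (by linarith)
    exact hle.antisymm (Int.cast_pos.1 this)
  rw [hone, Int.cast_one, one_mul, left_eq_add] at hsum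
  refine ⟨hc, hcf, fun k hk => ?_⟩
  split_ifs with hkf
  · rw [hkf, hone]
  · have := (Finset.sum_eq_zero_iff_of_nonpos hterm).1 hsum k (by simpa using hkf)
    simpa [hk, (R.sqLen_pos k).ne'] using this

lemma IsShortRoot.add_one_mul_sqLen_le (hG2 : R.NoTripleBond) {γ : E} (hγ : R.IsShortRoot γ)
    {m : ℕ} {j : Fin ℓ} (h : m * R.sqLen j < 2 * ⟪γ, γ⟫) :
    (m + 1) * R.sqLen j ≤ 2 * ⟪γ, γ⟫ := by
  have hs := real_inner_self_pos.2 (R.root_ne_zero _ hγ.1)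
  rcases hγ.sqLen_eq hG2 j with hj | hj <;> rw [hj] at h ⊢
  · have : m < 2 := by exact_mod_cast lt_of_mul_lt_mul_right h hs.le
    gcongr
    exact_mod_cast this
  · have : m < 1 := by
      exact_mod_cast lt_of_mul_lt_mul_right (h.trans_eq (one_mul _).symm) (by positivity)
    simp [Nat.lt_one_iff.1 this]

theorem IsShortRoot.exists_isLocallyFundamental_le (hG2 : R.NoTripleBond)
    (hc : R.IsShortRoot (R.vec c)) (hf : 2 * ⟪R.vec c, R.vec c⟫ ≤ c f * R.sqLen f) :
    ∃ d ≤ c, R.IsLocallyFundamental d f := by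
  obtain ⟨d, hdc, ⟨hd, hdf⟩, hmin⟩ := exists_minimal_le_of_wellFoundedLT
    (fun d => R.IsShortRoot (R.vec d) ∧ 2 * ⟪R.vec d, R.vec d⟫ ≤ d f * R.sqLen f) c ⟨hc, hf⟩
  have hlt : ∀ (d' : Fin ℓ → ℕ) (k : Fin ℓ), d = d' + Pi.single k 1 →
      R.IsShortRoot (R.vec d') → d' f * R.sqLen f < 2 * ⟪R.vec d, R.vec d⟫ := by
    intro d' k hk hd'
    by_contra! hle
    rw [hd.inner_self_eq hd'] at hle
    have := hmin ⟨hd', hle⟩ (hk ▸ le_self_add) k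
    simp [hk] at this
  have hneg : ∀ k ≠ f, R.pairing d k ≤ 0 := by
    intro k hkf
    by_contra! hk
    obtain ⟨d', hd', hshort⟩ :=
      hd.exists_eq_add_single ((hd.pairing_le_one_of_two_mul_le hdf k).antisymm hk)
    have := hlt d' k hd' hshort
    rw [hd', Pi.add_apply, Pi.single_eq_of_ne' hkf, add_zero, ← hd'] at hdf
    exact hdf.not_gt this
  refine ⟨d, hdc, hd.isLocallyFundamental (hdf.antisymm' ?_) hneg⟩
  obtain ⟨k, -, hk⟩ := R.exists_pairing_pos hd.ne_zero
  obtain rfl : k = f := of_not_not fun hkf => (hneg k hkf).not_gt hk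
  obtain ⟨d', hd', hshort⟩ :=
    hd.exists_eq_add_single ((hd.pairing_le_one_of_two_mul_le hdf k).antisymm hk)
  have hd'k := hlt d' k hd' hshort
  have hdk : d k = d' k + 1 := by rw [hd', Pi.add_apply, Pi.single_eq_same]
  rw [hdk, Nat.cast_add, Nat.cast_one]
  exact hd.add_one_mul_sqLen_le hG2 hd'k

end LocallyFundamental

section CartanEntries

variable {R : RootSystemData ℓ E} {i j k : Fin ℓ}

lemma IsShortRoot.sqLen_of_not_isShortRoot (hG2 : R.NoTripleBond) {γ : E} (hγ : R.IsShortRoot γ)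
    (hj : ¬ R.IsShortRoot (R.simple j)) : R.sqLen j = 2 * ⟪γ, γ⟫ :=
  (hγ.sqLen_eq hG2 j).resolve_left fun h => hj (hγ.of_inner_self_le (R.simple_mem j) h.le)

lemma cartan_neg_comm : R.cartan i j < 0 ↔ R.cartan j i < 0 := by
  have h {i j : Fin ℓ} (hij : R.cartan i j < 0) : R.cartan j i < 0 := by
    refine (cartan_nonpos ?_).lt_of_ne (mt R.cartan_eq_zero_comm.1 hij.ne)
    rintro rfl
    simp [cartan_self] at hij
  exact ⟨h, h⟩

lemma cartan_eq_neg_one_of_sqLen_le (hG2 : R.NoTripleBond) (hij : R.cartan i j < 0)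
    (hle : R.sqLen i ≤ R.sqLen j) : R.cartan i j = -1 := by
  have hne : i ≠ j := by
    rintro rfl
    simp [cartan_self] at hij
  have hcomm := R.cartan_mul_sqLen_comm i j
  rcases cartan_cases hG2 hne with h | h | h | h
  · exact absurd h.1 hij.ne
  · exact h.1
  · exact h.1
  · rw [h.1, h.2] at hcomm
    push_cast at hcomm
    linarith [R.sqLen_pos j]

lemma IsShortRoot.cartan_eq_neg_one (hG2 : R.NoTripleBond)
    (hi : R.IsShortRoot (R.simple i)) (hij : R.cartan i j < 0) : R.cartan i j = -1 :=
  cartan_eq_neg_one_of_sqLen_le hG2 hij (hi.le_sqLen j)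

lemma cartan_eq_neg_one_of_not_isShortRoot (hG2 : R.NoTripleBond)
    (hj : ¬ R.IsShortRoot (R.simple j)) (hij : R.cartan i j < 0) : R.cartan i j = -1 := by
  have : Nonempty (Fin ℓ) := ⟨i⟩
  obtain ⟨q, hq⟩ := exists_isShortRoot_simple R
  refine cartan_eq_neg_one_of_sqLen_le hG2 hij ?_
  rw [hq.sqLen_of_not_isShortRoot hG2 hj]
  have hpos := R.sqLen_pos q
  rw [← inner_simple_self] at hpos
  rcases hq.sqLen_eq hG2 i with h | h <;> linarith

lemma IsShortRoot.cartan_eq_neg_two (hG2 : R.NoTripleBond)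
    (hj : R.IsShortRoot (R.simple j)) (hi : ¬ R.IsShortRoot (R.simple i))
    (hij : R.cartan i j < 0) : R.cartan i j = -2 := by
  have hcomm := R.cartan_mul_sqLen_comm i j
  rw [hj.cartan_eq_neg_one hG2 (cartan_neg_comm.1 hij), hj.sqLen_of_not_isShortRoot hG2 hi,
    inner_simple_self, ← mul_assoc] at hcomm
  have := mul_right_cancel₀ (R.sqLen_pos j).ne' hcomm
  norm_num at this
  exact_mod_cast this

lemma IsShortRoot.eq_of_cartan_neg_of_not_isShortRoot (hG2 : R.NoTripleBond)
    (hi : R.IsShortRoot (R.simple i)) (hj : R.IsShortRoot (R.simple j))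
    (hk : ¬ R.IsShortRoot (R.simple k)) (hik : R.cartan i k < 0) (hjk : R.cartan j k < 0) :
    i = j := by
  by_contra hij
  rw [← R.vec_single i] at hi
  have hadd := hi.add_single (i := k) <| by
    rw [pairing_single, cartan_eq_neg_one_of_not_isShortRoot hG2 hk hik]
  have hle := hadd.neg_one_le_pairing j
  rw [pairing_add, pairing_single, pairing_single,
    hj.cartan_eq_neg_two hG2 hk (cartan_neg_comm.1 hjk)] at hle
  have := cartan_nonpos (R := R) hij
  omega

lemma IsShortRoot.eq_of_not_isShortRoot_of_cartan_neg (hG2 : R.NoTripleBond)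
    (hk : R.IsShortRoot (R.simple k)) (hi : ¬ R.IsShortRoot (R.simple i))
    (hj : ¬ R.IsShortRoot (R.simple j)) (hki : R.cartan k i < 0) (hkj : R.cartan k j < 0) :
    i = j := by
  rw [← R.vec_single k] at hk
  refine hk.eq_of_pairing_neg (hk.sqLen_of_not_isShortRoot hG2 hi)
    (hk.sqLen_of_not_isShortRoot hG2 hj) ?_ ?_ <;> rwa [pairing_single]

end CartanEntries

/-- The fundamental weight index of every locally fundamental short root below `vec b` has
nonpositive pairing with `vec b`: the failure of the support lemma for `vec b`. -/
def NonposAtPeaks (R : RootSystemData ℓ E) (b : Fin ℓ → ℕ) : Prop :=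
  ∀ c ≤ b, ∀ f, R.IsLocallyFundamental c f → R.pairing b f ≤ 0

section Maximal

variable {R : RootSystemData ℓ E} {b c : Fin ℓ → ℕ} {i : Fin ℓ}

lemma NonposAtPeaks.pairing_nonpos (hb : R.NonposAtPeaks b) (hG2 : R.NoTripleBond)
    (hc : R.IsShortRoot (R.vec c)) (hcb : c ≤ b)
    (hi : 2 * ⟪R.vec c, R.vec c⟫ ≤ c i * R.sqLen i) :
    R.pairing b i ≤ 0 := by
  obtain ⟨d, hdc, hd⟩ := hc.exists_isLocallyFundamental_le hG2 hi
  exact hb d (hdc.trans hcb) i hd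

lemma coeff_eq_of_maximal (hmax : Maximal (fun d => R.IsShortRoot (R.vec d) ∧ d ≤ b) c)
    (hi : R.pairing c i < 0) : c i = b i := by
  refine (hmax.prop.2 i).antisymm (not_lt.1 fun hlt => ?_)
  have hadd := hmax.prop.1.add_single
    (by have := hmax.prop.1.neg_one_le_pairing i; omega : R.pairing c i = -1)
  have hle : c + Pi.single i 1 ≤ b := by
    intro k
    rcases eq_or_ne k i with rfl | hk
    · simpa using hlt
    · simpa [hk] using hmax.prop.2 k
  simpa using hmax.2 ⟨hadd, hle⟩ le_self_add i

lemma coeff_ne_zero_of_maximal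
    (hmax : Maximal (fun d => R.IsShortRoot (R.vec d) ∧ d ≤ b) c) (hb : ∀ i, b i ≠ 0)
    (i : Fin ℓ) : c i ≠ 0 := by
  intro hi
  obtain ⟨-, z, -, hz, -, hneg⟩ := exists_adjacent (R := R) hmax.prop.1.ne_zero hi
  exact hb z ((coeff_eq_of_maximal hmax hneg).symm.trans hz)

end Maximal

section SimplyLaced

variable {R : RootSystemData ℓ E} {b c : Fin ℓ → ℕ}

lemma sum_mul_pairing_mul_inner_self (hshort : ∀ i, R.IsShortRoot (R.simple i)) {γ : E}
    (hγ : R.IsShortRoot γ) (c d : Fin ℓ → ℕ) :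
    ((∑ i, (d i : ℤ) * R.pairing c i : ℤ) : ℝ) * ⟪γ, γ⟫ = 2 * ⟪R.vec c, R.vec d⟫ := by
  rw [two_inner_vec_vec, Int.cast_sum, Finset.sum_mul]
  refine Finset.sum_congr rfl fun i _ => ?_
  rw [← inner_simple_self, ← hγ.inner_self_eq (hshort i)]
  push_cast
  ring

/-- With `γ = vec c` and `β = vec b`, the sum `∑ bᵢ⟨γ, αᵢ∨⟩ = ∑ cᵢ⟨β, αᵢ∨⟩` is at least
`∑ cᵢ⟨γ, αᵢ∨⟩ = 2` because `b = c` where `γ` pairs negatively, and at most the height bound `2`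
because `cᵢ = 1` where `β` pairs positively. -/
lemma pairing_nonneg_of_maximal (hG2 : R.NoTripleBond)
    (hshort : ∀ i, R.IsShortRoot (R.simple i)) (hb : ∀ i, b i ≠ 0) (hpeak : R.NonposAtPeaks b)
    (hsum : ∑ i, max (R.pairing b i) 0 ≤ 2)
    (hmax : Maximal (fun d => R.IsShortRoot (R.vec d) ∧ d ≤ b) c) (i : Fin ℓ) :
    0 ≤ R.pairing b i := by
  obtain ⟨hc, hcb⟩ := hmax.prop
  have hs := real_inner_self_pos.2 (R.vec_ne_zero hc.ne_zero)
  have hfull := coeff_ne_zero_of_maximal hmax hb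
  have hcomm : ∑ i, (c i : ℤ) * R.pairing b i = ∑ i, (b i : ℤ) * R.pairing c i := by
    have h := (sum_mul_pairing_mul_inner_self hshort hc b c).trans
      ((real_inner_comm (R.vec b) (R.vec c) ▸
        sum_mul_pairing_mul_inner_self hshort hc c b).symm)
    exact_mod_cast mul_right_cancel₀ hs.ne' h
  have htwo : ∑ i, (c i : ℤ) * R.pairing c i = 2 := by
    exact_mod_cast mul_right_cancel₀ hs.ne' (sum_mul_pairing_mul_inner_self hshort hc c c)
  have hlower : ∑ i, (c i : ℤ) * R.pairing c i ≤ ∑ i, (b i : ℤ) * R.pairing c i := by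
    refine Finset.sum_le_sum fun i _ => ?_
    rcases lt_or_ge (R.pairing c i) 0 with hi | hi
    · rw [coeff_eq_of_maximal hmax hi]
    · exact mul_le_mul_of_nonneg_right (by exact_mod_cast hcb i) hi
  have hupper : ∀ i ∈ Finset.univ, (c i : ℤ) * R.pairing b i ≤ max (R.pairing b i) 0 := by
    intro i _
    rcases (Nat.one_le_iff_ne_zero.2 (hfull i)).eq_or_lt with hi | hi
    · simp [← hi]
    · have hheavy : R.pairing b i ≤ 0 := by
        refine hpeak.pairing_nonpos hG2 hc hcb ?_
        rw [hc.inner_self_eq (hshort i), inner_simple_self]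
        exact mul_le_mul_of_nonneg_right (by exact_mod_cast hi) (R.sqLen_pos i).le
      exact le_max_of_le_right (mul_nonpos_of_nonneg_of_nonpos (Int.natCast_nonneg _) hheavy)
  have heq := (Finset.sum_eq_sum_iff_of_le hupper).1
    ((Finset.sum_le_sum hupper).antisymm (by omega)) i (Finset.mem_univ i)
  exact nonneg_of_mul_nonneg_right (heq ▸ le_max_right _ _)
    (by exact_mod_cast Nat.pos_of_ne_zero (hfull i))

theorem exists_dominant_le_of_simplyLaced [Nonempty (Fin ℓ)] (hG2 : R.NoTripleBond)
    (hshort : ∀ i, R.IsShortRoot (R.simple i)) (hb : ∀ i, b i ≠ 0) (hpeak : R.NonposAtPeaks b)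
    (hsum : ∑ i, max (R.pairing b i) 0 ≤ 2) :
    ∃ c ≤ b, R.IsShortRoot (R.vec c) ∧ ∀ i, 0 ≤ R.pairing c i := by
  obtain ⟨q⟩ := ‹Nonempty (Fin ℓ)›
  have hq : R.IsShortRoot (R.vec (Pi.single q 1)) := R.vec_single q ▸ hshort q
  obtain ⟨c, -, hmax⟩ := hq.exists_le_maximal (P := (· ≤ b)) (single_le_of_ne_zero (hb q))
  refine ⟨c, hmax.prop.2, hmax.prop.1, fun i => not_lt.1 fun hi => ?_⟩
  have hdiff : R.pairing (b - c) i ≤ 0 :=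
    pairing_nonpos (by simp [coeff_eq_of_maximal hmax hi])
  have hadd := R.pairing_add c (b - c) i
  rw [add_tsub_cancel_of_le hmax.prop.2] at hadd
  have := pairing_nonneg_of_maximal hG2 hshort hb hpeak hsum hmax i
  omega

end SimplyLaced

section ShortLeaf

variable {R : RootSystemData ℓ E} {c : Fin ℓ → ℕ} {i j p q : Fin ℓ}

lemma IsShortRoot.exists_sub_single_of_pairing_pos (hc : R.IsShortRoot (R.vec c))
    (hi : R.sqLen i = 2 * ⟪R.vec c, R.vec c⟫) (hci : 0 < R.pairing c i) :
    R.pairing c i = 1 ∧ ∃ d, c = d + Pi.single i 1 ∧ R.IsShortRoot (R.vec d) := by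
  have hne : R.vec c ≠ R.simple i := fun h => by
    rw [h, inner_simple_self] at hi
    linarith [R.sqLen_pos i]
  have hone := (hc.pairing_le_one hne).antisymm hci
  exact ⟨hone, hc.exists_eq_add_single hone⟩

lemma IsShortRoot.eq_of_pairing_pos (hc : R.IsShortRoot (R.vec c))
    (hi : R.sqLen i = 2 * ⟪R.vec c, R.vec c⟫) (hj : R.sqLen j = 2 * ⟪R.vec c, R.vec c⟫)
    (hci : 0 < R.pairing c i) (hcj : 0 < R.pairing c j) : i = j := by
  by_contra hij
  obtain ⟨hone, d, rfl, hd⟩ := hc.exists_sub_single_of_pairing_pos hi hci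
  rw [hc.inner_self_eq hd] at hi hj
  simp only [pairing_add, pairing_single, cartan_self] at hone hcj
  have hij0 := cartan_nonpos (R := R) hij
  obtain ⟨hone', d', rfl, hd'⟩ :=
    hd.exists_sub_single_of_pairing_pos (i := j) hj (by omega)
  rw [hd.inner_self_eq hd'] at hi hj
  simp only [pairing_add, pairing_single, cartan_self] at hone hone' hcj
  have := R.cartan_eq_zero_comm (i := i) (j := j)
  exact hij (hd'.eq_of_pairing_neg hi hj (by omega) (by omega))

/-- A short root that is maximal among those supported on `q` and the long simple roots, with
coefficients at most one, already involves every simple root. -/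
lemma isShortRoot_vec_one (hG2 : R.NoTripleBond) (hq : R.IsShortRoot (R.simple q))
    (hleaf : ∀ r, R.IsShortRoot (R.simple r) → 0 ≤ R.cartan q r) :
    R.IsShortRoot (R.vec 1) ∧ ∀ i ≠ q, ¬ R.IsShortRoot (R.simple i) := by
  classical
  let b : Fin ℓ → ℕ := fun i => if i = q ∨ ¬ R.IsShortRoot (R.simple i) then 1 else 0
  have hbone : b ≤ 1 := fun i => by
    dsimp only [b]
    split_ifs <;> simp
  have hq' : R.IsShortRoot (R.vec (Pi.single q 1)) := R.vec_single q ▸ hq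
  obtain ⟨c, -, hmax⟩ := hq'.exists_le_maximal (P := (· ≤ b))
    (single_le_of_ne_zero (by simp [b]))
  obtain ⟨hc, hcb⟩ := hmax.prop
  have hlong : ∀ i, c i ≠ 0 → i ≠ q → ¬ R.IsShortRoot (R.simple i) := fun i hi hiq hshort =>
    hi (Nat.eq_zero_of_le_zero (by simpa [b, hiq, hshort] using hcb i))
  have hfull : ∀ i, c i ≠ 0 := fun i hi => by
    obtain ⟨k, z, hk, hz, hkz, hneg⟩ := exists_adjacent (R := R) hc.ne_zero hi
    have hbz : b z = 0 := (coeff_eq_of_maximal hmax hneg).symm.trans hz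
    simp only [b, ite_eq_right_iff, one_ne_zero, imp_false, not_or, not_not] at hbz
    have hkq : k ≠ q := by
      rintro rfl
      exact (hleaf z hbz.2).not_gt hkz
    have hle := pairing_le_mul_cartan (R := R) hz k
    rw [hbz.2.cartan_eq_neg_two hG2 (hlong k hk hkq) hkz] at hle
    have := hc.neg_one_le_pairing z
    omega
  have hone : c = 1 := (hcb.trans hbone).antisymm fun i => Nat.one_le_iff_ne_zero.2 (hfull i)
  exact ⟨hone ▸ hc, fun i => hlong i (hfull i)⟩

/-- In type B, the sum of the simple roots is the highest short root. -/
theorem pairing_one_nonneg (hG2 : R.NoTripleBond) (hq : R.IsShortRoot (R.simple q))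
    (hp : ¬ R.IsShortRoot (R.simple p)) (hqp : R.cartan q p < 0)
    (hleaf : ∀ r, R.IsShortRoot (R.simple r) → 0 ≤ R.cartan q r) (i : Fin ℓ) :
    0 ≤ R.pairing 1 i := by
  obtain ⟨hc, hlong⟩ := isShortRoot_vec_one hG2 hq hleaf
  have hpq : p ≠ q := ne_of_apply_ne (fun i => R.IsShortRoot (R.simple i)) (by simp [hp, hq])
  have hpair_q : R.pairing 1 q ≤ 0 := by
    have hle := pairing_le_sum (R := R) (c := 1) (j := q) {p, q} (by simp)
    rw [Finset.sum_pair hpq, cartan_self, hq.cartan_eq_neg_two hG2 hp (cartan_neg_comm.1 hqp)]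
      at hle
    simpa using hle
  have hpos_long : ∀ i, 0 < R.pairing 1 i → R.sqLen i = 2 * ⟪R.vec 1, R.vec 1⟫ := fun i hi =>
    hc.sqLen_of_not_isShortRoot hG2 <| hlong i <| by
      rintro rfl
      exact hpair_q.not_gt hi
  obtain ⟨f, -, hf⟩ := R.exists_pairing_pos hc.ne_zero
  have hpeak := hc.isLocallyFundamental (f := f) (by simp [hpos_long f hf]) fun k hkf =>
    not_lt.1 fun hk => hkf (hc.eq_of_pairing_pos (hpos_long k hk) (hpos_long f hf) hk hf)
  exact hpeak.pairing_nonneg i one_ne_zero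

end ShortLeaf

section LongLeaf

variable {R : RootSystemData ℓ E} {b c : Fin ℓ → ℕ} {f i k m p q z : Fin ℓ}

/-- In type C with long simple root `αₚ`, the short root `vec c` has coefficient `1` at its tip
`i` and at `p`, and `2` strictly between them. Only what survives when the tip moves by one node
is recorded. -/
structure IsTypeCTail (R : RootSystemData ℓ E) (p q : Fin ℓ) (c : Fin ℓ → ℕ) (f i : Fin ℓ) :
    Prop where
  peak : R.IsLocallyFundamental c f
  isShortRoot_tip : R.IsShortRoot (R.simple i)
  coeff_tip : c i = 1
  cartan_tip : R.cartan i f < 0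
  coeff_ne_zero : c q ≠ 0
  eq_or_two_le : ∀ m, c m ≠ 0 → m = i ∨ m = p ∨ 2 ≤ c m

namespace IsTypeCTail

lemma ne (h : R.IsTypeCTail p q c f i) : i ≠ f := by
  rintro rfl
  simpa [cartan_self] using h.cartan_tip

lemma pairing_tip (h : R.IsTypeCTail p q c f i) : R.pairing c i = 0 := by
  rw [h.peak.pairing_eq i (by simp [h.coeff_tip]), if_neg h.ne]

lemma eq_tip_of_cartan_neg (hpleaf : ∀ k, R.cartan k p < 0 → k = q)
    (h : R.IsTypeCTail p q c f i) (hk : c k ≠ 0) (hm : c m = 0) (hkm : R.cartan k m < 0) :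
    k = i := by
  rcases h.eq_or_two_le k hk with hki | rfl | htwo
  · exact hki
  · exact absurd (hpleaf m (cartan_neg_comm.1 hkm) ▸ hm) h.coeff_ne_zero
  · have hle := pairing_le_mul_cartan (R := R) hm k
    have := h.peak.isShortRoot.neg_one_le_pairing m
    have : (2 : ℤ) ≤ c k := by exact_mod_cast htwo
    nlinarith

lemma two_mul_le_of_ne_tip (hG2 : R.NoTripleBond) (hp : ¬ R.IsShortRoot (R.simple p))
    (h : R.IsTypeCTail p q c f i) (hm : c m ≠ 0) (hmi : m ≠ i) :
    2 * ⟪R.vec c, R.vec c⟫ ≤ c m * R.sqLen m := by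
  rcases h.eq_or_two_le m hm with rfl | rfl | htwo
  · exact absurd rfl hmi
  · rw [← h.peak.isShortRoot.sqLen_of_not_isShortRoot hG2 hp]
    exact le_mul_of_one_le_left (R.sqLen_pos m).le (by exact_mod_cast Nat.pos_of_ne_zero hm)
  · exact mul_le_mul (by exact_mod_cast htwo) (h.peak.isShortRoot.le_sqLen m)
      real_inner_self_nonneg (Nat.cast_nonneg _)

lemma single_add_single (hG2 : R.NoTripleBond) (hp : ¬ R.IsShortRoot (R.simple p))
    (hq : R.IsShortRoot (R.simple q)) (hqp : R.cartan q p < 0) :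
    R.IsTypeCTail p q (Pi.single q 1 + Pi.single p 1) p q := by
  have hqp' := hq.cartan_eq_neg_one hG2 hqp
  have hpq := hq.cartan_eq_neg_two hG2 hp (cartan_neg_comm.1 hqp)
  have hne : q ≠ p := by
    rintro rfl
    exact hp hq
  have hshort : R.IsShortRoot (R.vec (Pi.single q 1 + Pi.single p 1)) := by
    rw [← R.vec_single q] at hq
    exact hq.add_single (by rw [pairing_single, hqp'])
  refine ⟨hshort.isLocallyFundamental ?_ fun k hkp => ?_, hq, by simp [hne], hqp, by simp,
    fun m hm => ?_⟩
  · simp [hne.symm, hshort.sqLen_of_not_isShortRoot hG2 hp]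
  · rw [pairing_add, pairing_single, pairing_single]
    rcases eq_or_ne k q with rfl | hkq
    · rw [cartan_self, hpq]
      decide
    · exact add_nonpos (cartan_nonpos hkq.symm) (cartan_nonpos hkp.symm)
  · by_contra! hmne
    simp [hmne.1, hmne.2.1] at hm

lemma pairing_erase_tip_nonneg (hpleaf : ∀ k, R.cartan k p < 0 → k = q)
    (h : R.IsTypeCTail p q (c + Pi.single i 1) f i) (hmi : m ≠ i) : 0 ≤ R.pairing c m := by
  have hadd := R.pairing_add c (Pi.single i 1) m
  rw [pairing_single] at hadd
  have him := cartan_nonpos (R := R) hmi.symm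
  by_cases hm : c m = 0
  · refine Finset.sum_nonneg fun k _ => ?_
    rcases eq_or_ne (c k) 0 with hk | hk
    · simp [hk]
    refine mul_nonneg (Int.natCast_nonneg _) (not_lt.1 fun hkm => ?_)
    obtain rfl := h.eq_tip_of_cartan_neg hpleaf (by simp [hk]) (by simp [hm, hmi]) hkm
    have := h.coeff_tip
    simp [hk] at this
  · have := h.peak.pairing_nonneg m (by simp [hm])
    omega

lemma inner_erase_tip_nonpos (hG2 : R.NoTripleBond) (hp : ¬ R.IsShortRoot (R.simple p))
    (hpeak : R.NonposAtPeaks b) (h : R.IsTypeCTail p q (c + Pi.single i 1) f i)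
    (hle : c + Pi.single i 1 ≤ b) : 2 * ⟪R.vec b, R.vec c⟫ ≤ 0 := by
  have hci : c i = 0 := by simpa using h.coeff_tip
  rw [two_inner_vec_vec]
  refine Finset.sum_nonpos fun m _ => ?_
  rcases eq_or_ne (c m) 0 with hm | hm
  · simp [hm]
  have hmi : m ≠ i := by
    rintro rfl
    exact hm hci
  have hheavy := h.two_mul_le_of_ne_tip hG2 hp (m := m) (by simp [hm]) hmi
  exact mul_nonpos_of_nonneg_of_nonpos (Nat.cast_nonneg _) <| mul_nonpos_of_nonpos_of_nonneg
    (by exact_mod_cast hpeak.pairing_nonpos hG2 h.peak.isShortRoot hle hheavy)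
    (R.sqLen_pos m).le

/-- Deleting the tip leaves `δ = vec c` with heavy coefficients only, so `β = vec b` pairs
nonpositively with it, whereas `δ` pairs positively with every simple coroot except the tip. -/
lemma two_le_coeff_tip (hG2 : R.NoTripleBond) (hp : ¬ R.IsShortRoot (R.simple p))
    (hpleaf : ∀ k, R.cartan k p < 0 → k = q) (hpeak : R.NonposAtPeaks b)
    (h : R.IsTypeCTail p q (c + Pi.single i 1) f i) (hle : c + Pi.single i 1 ≤ b) :
    2 ≤ b i := by
  have hupper := h.inner_erase_tip_nonpos hG2 hp hpeak hle
  have hpair_i : R.pairing c i = -2 := by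
    have := h.pairing_tip
    rw [pairing_add, pairing_single, cartan_self] at this
    omega
  have hpair_f : 2 ≤ R.pairing c f := by
    have := h.peak.pairing_eq f h.peak.ne_zero
    rw [if_pos rfl, pairing_add, pairing_single] at this
    have := h.cartan_tip
    omega
  have hlower : (b i : ℝ) * (R.pairing c i * R.sqLen i) + b f * (R.pairing c f * R.sqLen f) ≤
      2 * ⟪R.vec c, R.vec b⟫ := by
    rw [two_inner_vec_vec, ← Finset.sum_pair (f := fun m => (b m : ℝ) *
      (R.pairing c m * R.sqLen m)) h.ne]
    refine Finset.sum_le_sum_of_subset_of_nonneg (Finset.subset_univ _) fun m _ hm => ?_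
    have hmi : m ≠ i := fun hmi => hm (by simp [hmi])
    exact mul_nonneg (Nat.cast_nonneg _) (mul_nonneg
      (by exact_mod_cast h.pairing_erase_tip_nonneg hpleaf hmi) (R.sqLen_pos m).le)
  have hf : 2 * R.sqLen i ≤ b f * R.sqLen f := by
    have hself := h.peak.two_inner_self
    rw [h.peak.isShortRoot.inner_self_eq h.isShortRoot_tip, inner_simple_self] at hself
    rw [hself]
    exact mul_le_mul_of_nonneg_right (by exact_mod_cast hle f) (R.sqLen_pos f).le
  have hf' : 2 * (b f * R.sqLen f) ≤ b f * (R.pairing c f * R.sqLen f) := by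
    rw [mul_left_comm]
    exact mul_le_mul_of_nonneg_left (mul_le_mul_of_nonneg_right
      (by exact_mod_cast hpair_f) (R.sqLen_pos f).le) (Nat.cast_nonneg _)
  rw [hpair_i, real_inner_comm] at hlower
  push_cast at hlower
  have : (2 : ℝ) * R.sqLen i ≤ b i * R.sqLen i := by linarith
  exact_mod_cast le_of_mul_le_mul_right this (R.sqLen_pos i)

lemma exists_isShortRoot_adjacent_tip (hG2 : R.NoTripleBond)
    (hpleaf : ∀ k, R.cartan k p < 0 → k = q) (h : R.IsTypeCTail p q c f i) (hm : c m = 0) :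
    ∃ z, R.IsShortRoot (R.simple z) ∧ c z = 0 ∧ R.cartan z i < 0 ∧ R.pairing c z = -1 := by
  have hc := h.peak.isShortRoot
  obtain ⟨k, z, hk, hz, hkz, hneg⟩ := exists_adjacent (R := R) hc.ne_zero hm
  obtain rfl := h.eq_tip_of_cartan_neg hpleaf hk hz hkz
  have hzk := cartan_neg_comm.1 hkz
  have hpair : R.pairing c z = -1 := by
    have := hc.neg_one_le_pairing z
    omega
  refine ⟨z, of_not_not fun hlong => ?_, hz, hzk, hpair⟩
  have := (hc.add_single hpair).neg_one_le_pairing k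
  rw [pairing_add, pairing_single, h.pairing_tip,
    h.isShortRoot_tip.cartan_eq_neg_two hG2 hlong hzk] at this
  omega

lemma extend (hG2 : R.NoTripleBond) (h : R.IsTypeCTail p q c f i)
    (hz_short : R.IsShortRoot (R.simple z)) (hz : c z = 0) (hzi : R.cartan z i < 0)
    (hcz : R.pairing c z = -1) :
    R.IsTypeCTail p q (c + Pi.single z 1 + Pi.single i 1) i z := by
  have hne : z ≠ i := ne_of_apply_ne c (by simp [hz, h.coeff_tip])
  have hshort : R.IsShortRoot (R.vec (c + Pi.single z 1 + Pi.single i 1)) := by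
    refine (h.peak.isShortRoot.add_single hcz).add_single ?_
    rw [pairing_add, pairing_single, h.pairing_tip, zero_add, hz_short.cartan_eq_neg_one hG2 hzi]
  refine ⟨hshort.isLocallyFundamental ?_ fun l hl => ?_, hz_short, by simp [hz, hne], hzi,
    by simp [h.coeff_ne_zero], fun l hl => ?_⟩
  · rw [hshort.inner_self_eq h.isShortRoot_tip, inner_simple_self]
    simp [h.coeff_tip, hne.symm, one_add_one_eq_two]
  · rw [pairing_add, pairing_add, pairing_single, pairing_single]
    have hil := cartan_nonpos (R := R) hl.symm
    rcases eq_or_ne l z with rfl | hlz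
    · rw [cartan_self]
      have := cartan_neg_comm.1 hzi
      omega
    have hzl := cartan_nonpos (R := R) hlz.symm
    rcases eq_or_ne l f with rfl | hlf
    · have := h.cartan_tip
      have := h.peak.pairing_eq l h.peak.ne_zero
      rw [if_pos rfl] at this
      omega
    · have : R.pairing c l ≤ 0 := by
        by_cases hcl : c l = 0
        · exact pairing_nonpos hcl
        · rw [h.peak.pairing_eq l hcl, if_neg hlf]
      omega
  · by_contra! hlne
    rcases eq_or_ne l i with rfl | hli
    · simp [h.coeff_tip] at hlne
    · simp only [Pi.add_apply, Pi.single_eq_of_ne hlne.1, Pi.single_eq_of_ne hli, add_zero]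
        at hl hlne
      rcases h.eq_or_two_le l hl with hl | hl | hl
      · exact hli hl
      · exact hlne.2.1 hl
      · omega

end IsTypeCTail

theorem exists_dominant_le_of_longLeaf (hG2 : R.NoTripleBond)
    (hq : R.IsShortRoot (R.simple q)) (hp : ¬ R.IsShortRoot (R.simple p))
    (hqp : R.cartan q p < 0)
    (hleaf : ∀ r, ¬ R.IsShortRoot (R.simple r) → 0 ≤ R.cartan r p)
    (hb : ∀ i, b i ≠ 0) (hpeak : R.NonposAtPeaks b) :
    ∃ c ≤ b, R.IsShortRoot (R.vec c) ∧ ∀ i, 0 ≤ R.pairing c i := by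
  have hpleaf : ∀ k, R.cartan k p < 0 → k = q := fun k hkp =>
    IsShortRoot.eq_of_cartan_neg_of_not_isShortRoot hG2
      (of_not_not fun hk => (hleaf k hk).not_gt hkp) hq hp hkp hqp
  have hbase := IsTypeCTail.single_add_single hG2 hp hq hqp
  have hne : q ≠ p := hbase.ne
  have hbase_le : Pi.single q 1 + Pi.single p 1 ≤ b := fun k => by
    have := Nat.one_le_iff_ne_zero.2 (hb k)
    rcases eq_or_ne k q with rfl | hkq
    · simpa [hne] using this
    · simpa [hkq] using single_le_of_ne_zero (hb p) k
  obtain ⟨c, -, hmax⟩ := hbase.peak.isShortRoot.exists_le_maximal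
    (P := fun c => c ≤ b ∧ ∃ f i, R.IsTypeCTail p q c f i) ⟨hbase_le, p, q, hbase⟩
  obtain ⟨hc, hcb, f, i, h⟩ := hmax.prop
  refine ⟨c, hcb, hc, fun m => h.peak.pairing_nonneg m fun hm => ?_⟩
  obtain ⟨z, hz_short, hz, hzi, hcz⟩ := h.exists_isShortRoot_adjacent_tip hG2 hpleaf hm
  have hext := h.extend hG2 hz_short hz hzi hcz
  have hci := h.coeff_tip
  obtain ⟨v, rfl⟩ : ∃ v, c = v + Pi.single i 1 :=
    ⟨c - Pi.single i 1, (tsub_add_cancel_of_le (single_le_of_ne_zero (by simp [hci]))).symm⟩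
  have htwo := h.two_le_coeff_tip hG2 hp hpleaf hpeak hcb
  have hle : v + Pi.single i 1 + Pi.single z 1 + Pi.single i 1 ≤ b := fun k => by
    have hk := hcb k
    rcases eq_or_ne k i with rfl | hki
    · simpa [hext.ne.symm, show v k = 0 by simpa using hci] using htwo
    rcases eq_or_ne k z with rfl | hkz
    · have : v k = 0 := by simpa [hki] using hz
      simpa [hki, this] using Nat.one_le_iff_ne_zero.2 (hb k)
    · simpa [hki, hkz] using hk
  have := hmax.le_of_ge ⟨hext.peak.isShortRoot, hle, i, z, hext⟩
    (by rw [add_assoc]; exact le_self_add) z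
  simp at this

end LongLeaf

section F4

variable {R : RootSystemData ℓ E} {b : Fin ℓ → ℕ} {e : Fin 4 → Fin ℓ} {c d : Fin 4 → ℕ}
  {p q r s z : Fin ℓ}

/-- The simple roots `αₑ₀, αₑ₁` (long) and `αₑ₂, αₑ₃` (short) span a subdiagram of type F₄. -/
structure IsF4Chain (R : RootSystemData ℓ E) (e : Fin 4 → Fin ℓ) : Prop where
  cartan_eq : ∀ x y, R.cartan (e x) (e y) = CartanMatrix.F₄ x y
  isShortRoot_iff : ∀ x, R.IsShortRoot (R.simple (e x)) ↔ 2 ≤ x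

lemma isF4Chain_of_cartan_neg (hG2 : R.NoTripleBond) (hs : ¬ R.IsShortRoot (R.simple s))
    (hp : ¬ R.IsShortRoot (R.simple p)) (hq : R.IsShortRoot (R.simple q))
    (hr : R.IsShortRoot (R.simple r)) (hsp : R.cartan s p < 0) (hqp : R.cartan q p < 0)
    (hqr : R.cartan q r < 0) : R.IsF4Chain ![s, p, q, r] := by
  have hps := cartan_neg_comm.1 hsp
  have hpq := cartan_neg_comm.1 hqp
  have hrq := cartan_neg_comm.1 hqr
  have hne_sp : s ≠ p := fun h => by simp [h, cartan_self] at hsp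
  have hne_qr : q ≠ r := fun h => by simp [h, cartan_self] at hqr
  have hne {i j : Fin ℓ} (hi : ¬ R.IsShortRoot (R.simple i)) (hj : R.IsShortRoot (R.simple j)) :
      i ≠ j := fun h => hi (h ▸ hj)
  have hsq : R.cartan s q = 0 := (cartan_nonpos (hne hs hq)).antisymm <| not_lt.1 fun h =>
    hne_sp (hq.eq_of_not_isShortRoot_of_cartan_neg hG2 hs hp (cartan_neg_comm.1 h) hqp)
  have hpr : R.cartan p r = 0 := (cartan_nonpos (hne hp hr)).antisymm <| not_lt.1 fun h =>
    hne_qr (hq.eq_of_cartan_neg_of_not_isShortRoot hG2 hr hp hqp (cartan_neg_comm.1 h))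
  have hqp' := hq.cartan_eq_neg_one hG2 hqp
  have hqr' := hq.cartan_eq_neg_one hG2 hqr
  have hps' := cartan_eq_neg_one_of_not_isShortRoot hG2 hs hps
  have hsr : R.cartan s r = 0 := (cartan_nonpos (hne hs hr)).antisymm <| not_lt.1 fun h => by
    have hqpr : R.IsShortRoot (R.vec (Pi.single q 1 + Pi.single p 1 + Pi.single r 1)) := by
      rw [← R.vec_single q] at hq
      refine (hq.add_single ?_).add_single ?_ <;> simp [pairing_add, pairing_single, *]
    have hle := hqpr.neg_one_le_pairing s
    simp only [pairing_add, pairing_single, hps'] at hle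
    have := cartan_neg_comm.1 h
    have := cartan_nonpos (R := R) (hne hs hq).symm
    omega
  have hsp' := cartan_eq_neg_one_of_not_isShortRoot hG2 hp hsp
  have hpq' := hq.cartan_eq_neg_two hG2 hp hpq
  have hrq' := hr.cartan_eq_neg_one hG2 hrq
  refine ⟨fun x y => ?_, fun x => ?_⟩
  · have := R.cartan_eq_zero_comm.1 hsq
    have := R.cartan_eq_zero_comm.1 hpr
    have := R.cartan_eq_zero_comm.1 hsr
    fin_cases x <;> fin_cases y <;> simp [CartanMatrix.F₄, cartan_self, *]
  · fin_cases x <;> simp [hs, hp, hq, hr]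

lemma extend_add_single (he : Function.Injective e) (c : Fin 4 → ℕ) (y : Fin 4) :
    Function.extend e (c + Pi.single y 1) 0 = Function.extend e c 0 + Pi.single (e y) 1 := by
  ext i
  by_cases hi : ∃ x, e x = i
  · obtain ⟨x, rfl⟩ := hi
    simp [he.extend_apply, Pi.single_apply, he.eq_iff]
  · have : i ≠ e y := fun hiy => hi ⟨y, hiy.symm⟩
    simp [Function.extend_apply' _ _ _ hi, this]

lemma extend_le_iff (he : Function.Injective e) :
    Function.extend e c 0 ≤ b ↔ ∀ x, c x ≤ b (e x) := by
  refine ⟨fun hle x => by simpa [he.extend_apply] using hle (e x), fun hle i => ?_⟩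
  by_cases hi : ∃ x, e x = i
  · obtain ⟨x, rfl⟩ := hi
    simpa [he.extend_apply] using hle x
  · simp [Function.extend_apply' _ _ _ hi]

namespace IsF4Chain

lemma injective (h : R.IsF4Chain e) : Function.Injective e := by
  intro x y hxy
  by_contra hne
  have hnonpos := CartanMatrix.F₄_off_diag_nonpos x y hne
  rw [← h.cartan_eq, hxy, cartan_self] at hnonpos
  exact hnonpos.not_gt two_pos

lemma pairing_extend (h : R.IsF4Chain e) (c : Fin 4 → ℕ) (j : Fin ℓ) :
    R.pairing (Function.extend e c 0) j = ∑ x, (c x : ℤ) * R.cartan (e x) j := by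
  have hsum := Finset.sum_image (f := fun i => ((Function.extend e c 0 i : ℕ) : ℤ) * R.cartan i j)
    (s := Finset.univ) h.injective.injOn
  simp only [h.injective.extend_apply] at hsum
  rw [← hsum]
  refine (Finset.sum_subset (Finset.subset_univ _) fun i _ hi => ?_).symm
  rw [Function.extend_apply' _ _ _ (by simpa using hi)]
  simp

lemma pairing_extend_apply (h : R.IsF4Chain e) (c : Fin 4 → ℕ) (y : Fin 4) :
    R.pairing (Function.extend e c 0) (e y) = ∑ x, (c x : ℤ) * CartanMatrix.F₄ x y := by
  simp only [h.pairing_extend, h.cartan_eq]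

lemma isShortRoot_of_add_single (h : R.IsF4Chain e)
    (hc : R.IsShortRoot (R.vec (Function.extend e c 0))) (y : Fin 4)
    (hy : ∑ x, (c x : ℤ) * CartanMatrix.F₄ x y = -1) (hd : c + Pi.single y 1 = d) :
    R.IsShortRoot (R.vec (Function.extend e d 0)) := by
  rw [← hd, extend_add_single h.injective]
  exact hc.add_single ((h.pairing_extend_apply c y).trans hy)

lemma isShortRoot_0110 (h : R.IsF4Chain e) :
    R.IsShortRoot (R.vec (Function.extend e ![0, 1, 1, 0] 0)) := by
  have h0010 : R.IsShortRoot (R.vec (Function.extend e ![0, 0, 1, 0] 0)) := by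
    rw [show ![0, 0, 1, 0] = 0 + Pi.single (2 : Fin 4) 1 by decide,
      extend_add_single h.injective, Function.extend_zero, zero_add, vec_single]
    exact (h.isShortRoot_iff 2).2 le_rfl
  exact h.isShortRoot_of_add_single h0010 1 (by decide) (by decide)

lemma isShortRoot_1110 (h : R.IsF4Chain e) :
    R.IsShortRoot (R.vec (Function.extend e ![1, 1, 1, 0] 0)) :=
  h.isShortRoot_of_add_single h.isShortRoot_0110 0 (by decide) (by decide)

lemma isShortRoot_0121 (h : R.IsF4Chain e) :
    R.IsShortRoot (R.vec (Function.extend e ![0, 1, 2, 1] 0)) := by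
  have h0111 := h.isShortRoot_of_add_single h.isShortRoot_0110 (d := ![0, 1, 1, 1]) 3
    (by decide) (by decide)
  exact h.isShortRoot_of_add_single h0111 2 (by decide) (by decide)

lemma isShortRoot_1232 (h : R.IsF4Chain e) :
    R.IsShortRoot (R.vec (Function.extend e ![1, 2, 3, 2] 0)) := by
  have h1111 := h.isShortRoot_of_add_single h.isShortRoot_1110 (d := ![1, 1, 1, 1]) 3
    (by decide) (by decide)
  have h1121 := h.isShortRoot_of_add_single h1111 (d := ![1, 1, 2, 1]) 2 (by decide) (by decide)
  have h1221 := h.isShortRoot_of_add_single h1121 (d := ![1, 2, 2, 1]) 1 (by decide) (by decide)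
  have h1231 := h.isShortRoot_of_add_single h1221 (d := ![1, 2, 3, 1]) 2 (by decide) (by decide)
  exact h.isShortRoot_of_add_single h1231 3 (by decide) (by decide)

lemma pairing_extend_1232 (h : R.IsF4Chain e) (y : Fin 4) :
    R.pairing (Function.extend e ![1, 2, 3, 2] 0) (e y) = if y = 3 then 1 else 0 := by
  rw [h.pairing_extend_apply]
  revert y
  decide

/-- The long end `e 0` has the only coefficient `1` in the short root `1232`. -/
lemma eq_zero_of_cartan_neg (h : R.IsF4Chain e) {x : Fin 4} (hz : ¬ ∃ y, e y = z)
    (hxz : R.cartan (e x) z < 0) : x = 0 := by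
  have hθ := h.isShortRoot_1232
  have hle := pairing_le_mul_cartan (R := R) (c := Function.extend e ![1, 2, 3, 2] 0)
    (Function.extend_apply' _ _ _ hz) (e x)
  have hge := hθ.neg_one_le_pairing z
  rw [h.injective.extend_apply] at hle
  have hx : (![1, 2, 3, 2] : Fin 4 → ℕ) x < 2 := by
    by_contra! hx
    have : (2 : ℤ) ≤ (![1, 2, 3, 2] : Fin 4 → ℕ) x := by exact_mod_cast hx
    nlinarith
  exact (by decide : ∀ x : Fin 4, (![1, 2, 3, 2] : Fin 4 → ℕ) x < 2 → x = 0) x hx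

/-- If `z` were adjacent to `e 0`, adding `z`, `e 0` and `e 1` to the short root `1232` would give
a short root whose pairing with the coroot of `e 2` is `-2`. -/
lemma surjective (h : R.IsF4Chain e) : Function.Surjective e := by
  by_contra hsurj
  obtain ⟨i, hi⟩ := not_forall.1 hsurj
  obtain ⟨-, z, ⟨x, rfl⟩, hz, hxz⟩ := exists_cartan_neg (R := R) (P := (∃ x, e x = ·)) ⟨0, rfl⟩ hi
  obtain rfl := h.eq_zero_of_cartan_neg hz hxz
  have hθ := h.isShortRoot_1232
  have hθz := pairing_le_mul_cartan (R := R) (c := Function.extend e ![1, 2, 3, 2] 0)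
    (Function.extend_apply' _ _ _ hz) (e 0)
  rw [h.injective.extend_apply, Matrix.cons_val_zero, Nat.cast_one, one_mul] at hθz
  have hz_short := hθ.add_single (i := z) (by have := hθ.neg_one_le_pairing z; omega)
  have hz0 := hz_short.neg_one_le_pairing (e 0)
  have hze (y : Fin 4) : R.cartan z (e y) ≤ 0 := cartan_nonpos fun hzy => hz ⟨y, hzy.symm⟩
  have h0z := cartan_neg_comm.1 hxz
  have h0_short := hz_short.add_single (i := e 0) (by
    rw [pairing_add, pairing_single, h.pairing_extend_1232, if_neg (by decide)] at hz0 ⊢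
    omega)
  have h01 : R.cartan (e 0) (e 1) = -1 := h.cartan_eq 0 1
  have h02 : R.cartan (e 0) (e 2) = 0 := h.cartan_eq 0 2
  have h12 : R.cartan (e 1) (e 2) = -2 := h.cartan_eq 1 2
  have h1_short := h0_short.add_single (i := e 1) (by
    have hle := h0_short.neg_one_le_pairing (e 1)
    rw [pairing_add, pairing_add, pairing_single, pairing_single, h.pairing_extend_1232,
      if_neg (by decide)] at hle ⊢
    have := hze 1
    omega)
  have hle := h1_short.neg_one_le_pairing (e 2)
  simp only [pairing_add, pairing_single, h.pairing_extend_1232, h02, h12] at hle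
  have := hze 2
  rw [if_neg (by decide)] at hle
  omega

lemma pairing_eq_sum (h : R.IsF4Chain e) (y : Fin 4) :
    R.pairing b (e y) = ∑ x, (b (e x) : ℤ) * CartanMatrix.F₄ x y := by
  simp only [← h.cartan_eq]
  exact (Function.Bijective.sum_comp ⟨h.injective, h.surjective⟩
    fun i => (b i : ℤ) * R.cartan i (e y)).symm

lemma pairing_zero (h : R.IsF4Chain e) : R.pairing b (e 0) = 2 * b (e 0) - b (e 1) := by
  simp [h.pairing_eq_sum, Fin.sum_univ_four, CartanMatrix.F₄, sub_eq_add_neg, mul_comm]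

lemma pairing_one (h : R.IsF4Chain e) :
    R.pairing b (e 1) = -b (e 0) + 2 * b (e 1) - b (e 2) := by
  simp [h.pairing_eq_sum, Fin.sum_univ_four, CartanMatrix.F₄, sub_eq_add_neg, mul_comm]

lemma pairing_two (h : R.IsF4Chain e) :
    R.pairing b (e 2) = -(2 * b (e 1)) + 2 * b (e 2) - b (e 3) := by
  simp [h.pairing_eq_sum, Fin.sum_univ_four, CartanMatrix.F₄, sub_eq_add_neg, mul_comm]

/-- The short roots `1110` and `0121` have heavy coefficients at `e 0`, `e 1` and at `e 2`. The
resulting nonpositivity of `⟨β, αᵢ∨⟩` there bounds the coefficients of `β = vec b` from below by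
those of the highest short root `1232`. -/
theorem exists_dominant_le (hG2 : R.NoTripleBond) (h : R.IsF4Chain e) (hb : ∀ i, b i ≠ 0)
    (hpeak : R.NonposAtPeaks b) :
    ∃ c ≤ b, R.IsShortRoot (R.vec c) ∧ ∀ i, 0 ≤ R.pairing c i := by
  have hpos (x : Fin 4) : 1 ≤ b (e x) := Nat.one_le_iff_ne_zero.2 (hb (e x))
  have hlong (y : Fin 4) (hy : y < 2) : R.pairing b (e y) ≤ 0 := by
    refine hpeak.pairing_nonpos hG2 h.isShortRoot_1110 ?_ ?_
    · refine (extend_le_iff h.injective).2 fun x => le_trans ?_ (hpos x)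
      revert x
      decide
    · have hy_long := (h.isShortRoot_iff y).not.2 hy.not_ge
      have hy_one := (by decide : ∀ y : Fin 4, y < 2 → (![1, 1, 1, 0] : Fin 4 → ℕ) y = 1) y hy
      rw [h.injective.extend_apply, h.isShortRoot_1110.sqLen_of_not_isShortRoot hG2 hy_long,
        hy_one, Nat.cast_one, one_mul]
  have h0 : 2 * b (e 0) ≤ b (e 1) := by
    have := hlong 0 (by decide)
    rw [h.pairing_zero] at this
    omega
  have h1 : 2 * b (e 1) ≤ b (e 0) + b (e 2) := by
    have := hlong 1 (by decide)
    rw [h.pairing_one] at this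
    omega
  have h2 : R.pairing b (e 2) ≤ 0 := by
    refine hpeak.pairing_nonpos hG2 h.isShortRoot_0121 ?_ ?_
    · refine (extend_le_iff h.injective).2 ?_
      have : 2 ≤ b (e 2) := by have := hpos 0; omega
      simpa [Fin.forall_fin_succ] using ⟨hpos 1, this, hpos 3⟩
    · have he2 := (h.isShortRoot_iff 2).2 le_rfl
      rw [h.injective.extend_apply, h.isShortRoot_0121.inner_self_eq he2, inner_simple_self]
      simp
  rw [h.pairing_two] at h2
  refine ⟨_, ?_, h.isShortRoot_1232, fun i => ?_⟩
  · refine (extend_le_iff h.injective).2 ?_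
    have := hpos 0
    simpa [Fin.forall_fin_succ] using
      (by omega : 1 ≤ b (e 0) ∧ 2 ≤ b (e 1) ∧ 3 ≤ b (e 2) ∧ 2 ≤ b (e 3))
  · obtain ⟨y, rfl⟩ := h.surjective i
    rw [h.pairing_extend_1232]
    split_ifs <;> decide

end IsF4Chain

end F4

section Main

variable {R : RootSystemData ℓ E} {b c : Fin ℓ → ℕ}

/-- If both lengths occur, the double bond has a leaf at its short end (type B), at its long end
(type C), or at neither (type F₄). -/
theorem exists_dominant_le [Nonempty (Fin ℓ)] (hG2 : R.NoTripleBond) (hb : ∀ i, b i ≠ 0)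
    (hpeak : R.NonposAtPeaks b)
    (hsum : (∀ i, R.IsShortRoot (R.simple i)) → ∑ i, max (R.pairing b i) 0 ≤ 2) :
    ∃ c ≤ b, R.IsShortRoot (R.vec c) ∧ ∀ i, 0 ≤ R.pairing c i := by
  by_cases hshort : ∀ i, R.IsShortRoot (R.simple i)
  · exact exists_dominant_le_of_simplyLaced hG2 hshort hb hpeak (hsum hshort)
  obtain ⟨j, hj⟩ := not_forall.1 hshort
  obtain ⟨i, hi⟩ := exists_isShortRoot_simple R
  obtain ⟨q, p, hq, hp, hqp⟩ :=
    exists_cartan_neg (R := R) (P := fun i => R.IsShortRoot (R.simple i)) hi hj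
  by_cases hqleaf : ∀ r, R.IsShortRoot (R.simple r) → 0 ≤ R.cartan q r
  · exact ⟨1, fun i => Nat.one_le_iff_ne_zero.2 (hb i), (isShortRoot_vec_one hG2 hq hqleaf).1,
      pairing_one_nonneg hG2 hq hp hqp hqleaf⟩
  by_cases hpleaf : ∀ s, ¬ R.IsShortRoot (R.simple s) → 0 ≤ R.cartan s p
  · exact exists_dominant_le_of_longLeaf hG2 hq hp hqp hpleaf hb hpeak
  push Not at hqleaf hpleaf
  obtain ⟨r, hr, hqr⟩ := hqleaf
  obtain ⟨s, hs, hsp⟩ := hpleaf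
  exact (isF4Chain_of_cartan_neg hG2 hs hp hq hr hsp hqp hqr).exists_dominant_le hG2 hb hpeak

lemma IsShortRoot.isHighestShortRoot_univ (hc : R.IsShortRoot (R.vec c))
    (hdom : ∀ i, 0 ≤ R.pairing c i) : R.IsHighestShortRoot Finset.univ (R.vec c) := by
  have hsupp : supp c = Finset.univ := Finset.eq_univ_of_forall fun i =>
    mem_supp.2 (ne_zero_of_pairing_nonneg hc.ne_zero hdom i)
  exact hsupp ▸ hc.isHighestShortRoot fun i _ => hdom i

lemma exists_eq_vec_of_sum_simple_wle {β : E} (hβ : R.wle (∑ i, R.simple i) β) :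
    ∃ b, (∀ i, b i ≠ 0) ∧ β = R.vec b := by
  obtain ⟨d, hd⟩ := hβ
  refine ⟨1 + d, fun i => by simp, ?_⟩
  rw [sub_eq_iff_eq_add'.1 hd, vec_add]
  simp [vec]

lemma simplyLaced_of_isShortRoot (hG2 : R.NoTripleBond)
    (hshort : ∀ i, R.IsShortRoot (R.simple i)) (I : Finset (Fin ℓ)) : R.SimplyLaced I := by
  intro i _ j _ hij
  rw [cpair_simple]
  rcases (cartan_nonpos (R := R) hij).eq_or_lt with h | h
  · simp [h]
  · simp [(hshort i).cartan_eq_neg_one hG2 h]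

lemma connected_univ [Nonempty (Fin ℓ)] (R : RootSystemData ℓ E) : R.Connected Finset.univ :=
  ⟨Finset.univ_nonempty, fun S _ hS horth =>
    R.irred S hS fun i hi j hj => horth i hi j (Finset.mem_univ j) hj⟩

lemma SimplyLaced.not_isF4 (h : R.SimplyLaced Finset.univ) : ¬ R.IsF4 := by
  rintro ⟨e, he⟩
  have h21 : cpair (R.simple (e 1)) (R.simple (e 2)) = -2 := he 2 1
  rcases h _ (Finset.mem_univ (e 1)) _ (Finset.mem_univ (e 2)) (e.injective.ne (by decide))
    with h | h <;> norm_num [h21] at h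

end Main

end RootSystemData

theorem statement16_general (hℓ : 0 < ℓ) (R : RootSystemData ℓ E) (hG2 : R.NoTripleBond)
    (ω : Fin ℓ → E) (hω : ∀ i j, cpair (ω i) (R.simple j) = if i = j then 1 else 0)
    (β : E) (hβ : R.wle (∑ i, R.simple i) β)
    (hht : R.SimplyLaced Finset.univ → ∑ i, max (cpair β (R.simple i)) 0 ≤ 2)
    (hnotfull : ∀ θ, R.IsHighestShortRoot Finset.univ θ → ¬ R.wle θ β) :
    ∃ (I : Finset (Fin ℓ)) (θ η : E) (f : Fin ℓ),
      R.Connected I ∧ ¬ R.IsTypeASub I ∧ R.IsHighestShortRoot I θ ∧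
      R.wle θ β ∧ R.IsDominant η ∧ (∀ i ∈ I, cpair η (R.simple i) = 0) ∧
      θ = ω f - η ∧ 0 < cpair β (R.simple f) := by
  have : Nonempty (Fin ℓ) := ⟨⟨0, hℓ⟩⟩
  obtain ⟨b, hb, rfl⟩ := RootSystemData.exists_eq_vec_of_sum_simple_wle hβ
  simp only [R.cpair_vec] at hht ⊢
  by_contra hno
  have hpeak : R.NonposAtPeaks b := fun c hcb f hc => not_lt.1 fun hf => by
    have hη := hc.isDominant_sub (w := ω f) fun i => by simp only [hω, eq_comm]
    exact hno ⟨_, _, _, f, hc.connected, hc.not_isTypeASub, hc.isHighestShortRoot,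
      R.wle_vec_of_le hcb, hη.1, hη.2, (sub_sub_cancel _ _).symm, Int.cast_pos.2 hf⟩
  obtain ⟨c, hcb, hc, hdom⟩ := RootSystemData.exists_dominant_le hG2 hb hpeak fun hshort => by
    exact_mod_cast hht (RootSystemData.simplyLaced_of_isShortRoot hG2 hshort _)
  exact hnotfull _ (hc.isHighestShortRoot_univ hdom) (R.wle_vec_of_le hcb)

/-- The support lemma: if `Φ` is not of type A or G₂, `β ≥ Σᵢ αᵢ`,
`ht₀⁺(β) ≤ 2` and the full index set is not in `I(β)` (no highest short root of
the whole system lies below `β`), then there is an irreducible non-type-A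
subset `I` with `θ_I ≤ β` whose associated fundamental-weight index `f(I)`
carries a positive coefficient `a_{f(I)} = ⟨β, α_{f(I)}∨⟩ > 0`, where
`θ_I = ω_{f(I)} - η` with `η` dominant supported away from `I`. -/
theorem statement16 (hℓ : 0 < ℓ) (R : RootSystemData ℓ E)
    (hA : ¬ R.IsTypeASub Finset.univ)
    (hG2 : ∀ i j : Fin ℓ, cpair (R.simple i) (R.simple j) ≠ -3)
    (ω : Fin ℓ → E)
    (hω : ∀ i j, cpair (ω i) (R.simple j) = if i = j then 1 else 0)
    (hspan : ∀ i, ∃ c : Fin ℓ → ℝ, ω i = ∑ j, c j • R.simple j)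
    (β : E) (hβ : R.wle (∑ i, R.simple i) β)
    (I0 : Finset (Fin ℓ)) (h0 : (⟨0, hℓ⟩ : Fin ℓ) ∈ I0)
    (hSL : R.SimplyLaced I0) (hConn : R.Connected I0)
    (hmax : ∀ S : Finset (Fin ℓ), I0 ⊆ S → (⟨0, hℓ⟩ : Fin ℓ) ∈ S →
      R.SimplyLaced S → R.Connected S → S = I0)
    (hht1 : ¬ R.IsF4 → ∑ i ∈ I0, max (cpair β (R.simple i)) 0 ≤ 2)
    (hht2 : ∀ e : Fin 4 ≃o Fin ℓ,
      (∀ a b : Fin 4, cpair (R.simple (e b)) (R.simple (e a)) = F4Cartan a b) →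
      max (max (cpair β (R.simple (e 0))) 0 + max (cpair β (R.simple (e 1))) 0)
          (max (cpair β (R.simple (e 2))) 0 + max (cpair β (R.simple (e 3))) 0)
        ≤ 2)
    (hnotfull : ∀ θ, R.IsHighestShortRoot Finset.univ θ → ¬ R.wle θ β) :
    ∃ (I : Finset (Fin ℓ)) (θ η : E) (f : Fin ℓ),
      R.Connected I ∧ ¬ R.IsTypeASub I ∧ R.IsHighestShortRoot I θ ∧
      R.wle θ β ∧ R.IsDominant η ∧ (∀ i ∈ I, cpair η (R.simple i) = 0) ∧
      θ = ω f - η ∧ 0 < cpair β (R.simple f) := by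
  have : Nonempty (Fin ℓ) := ⟨⟨0, hℓ⟩⟩
  refine statement16_general hℓ R hG2 ω hω β hβ (fun hlaced => ?_) hnotfull
  rw [hmax _ (Finset.subset_univ _) (Finset.mem_univ _) hlaced R.connected_univ]
  exact hht1 hlaced.not_isF4
end
end

section
/- Let Φ be an irreducible reduced root system of type B_ℓ. Then β ≥ Σ_{i=1}^ℓ αᵢ implies β ≥ θ, the highest short root of Φ, since θ = α₁ + ... + α_ℓ = ω₁ exactly equals the sum of all simple roots. More generally, for any irreducible reduced Φ, if (λ,μ,ν) is a low triple then λ + μ − ν ≥ θ where θ is the highest short root. -/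
open scoped RealInnerProductSpace

noncomputable section

variable {E : Type*} [NormedAddCommGroup E] [InnerProductSpace ℝ E]

variable {ℓ : ℕ}

/-- `R` is of type B_ℓ (Bourbaki numbering, `α_ℓ` short). -/
def RootSystemData.IsTypeB (R : RootSystemData ℓ E) : Prop :=
  ∀ i j : Fin ℓ, cpair (R.simple j) (R.simple i) =
    if i = j then 2
    else if (j : ℕ) + 1 = (i : ℕ) ∧ (i : ℕ) = ℓ - 1 then -2
    else if (i : ℕ) + 1 = (j : ℕ) ∨ (j : ℕ) + 1 = (i : ℕ) then -1 else 0

/-!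
Let `β = λ + μ - ν` for a low triple. Adding to `λ - β` simple roots that pair negatively with it
never increases the length and ends at a dominant weight between `λ - β` and `λ`; lowness forces
this weight to be `λ`. Hence `‖λ‖ ≤ ‖μ - ν‖`, and symmetrically `‖μ‖ ≤ ‖λ - ν‖`. Adding the squares
gives `⟪β, ν⟫ ≤ 0`. As `β` involves every simple root and `ν` is dominant, `ν` is orthogonal to all
simple roots, so `β` is dominant along with `λ + μ`.

It remains to compare `θ` with a dominant `β` involving every simple root. The coordinatewise
minimum `δ` of `θ` and `β` is dominant and nonzero. A nonzero sum of simple roots is at least as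
long as some simple root, so `‖θ‖ ≤ ‖δ‖`; but `θ - δ` pairs nonnegatively with `δ`, so
`θ = δ ≤ β`.

In type `B` the sum of the simple roots is itself dominant, so it lies above `θ`; and it lies below
`θ` because, by irreducibility, a nonzero dominant combination of simple roots involves all of them.
-/

section Cpair

/-- The coroot `α∨` as a linear form, that is, `cpair · α` in bundled form. -/
def corootForm (α : E) : E →ₗ[ℝ] ℝ := (2 / ⟪α, α⟫) • innerₛₗ ℝ α

lemma corootForm_apply (α x : E) : corootForm α x = cpair x α := by
  simp only [corootForm, cpair, LinearMap.smul_apply, innerₛₗ_apply_apply, smul_eq_mul,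
    real_inner_comm x α]
  ring

lemma cpair_sum {ι : Type*} (s : Finset ι) (x : ι → E) (α : E) :
    cpair (∑ i ∈ s, x i) α = ∑ i ∈ s, cpair (x i) α := by
  simp only [← corootForm_apply, map_sum]

lemma cpair_mul_norm_sq (x α : E) : cpair x α * ‖α‖ ^ 2 = 2 * ⟪x, α⟫ := by
  rcases eq_or_ne α 0 with rfl | hα
  · simp
  · rw [cpair, real_inner_self_eq_norm_sq]
    field_simp [norm_ne_zero_iff.mpr hα]

lemma cpair_nonneg_iff {x α : E} : 0 ≤ cpair x α ↔ 0 ≤ ⟪x, α⟫ := by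
  rcases eq_or_ne α 0 with rfl | hα
  · simp [cpair]
  · rw [cpair, le_div_iff₀ (real_inner_self_pos.mpr hα), zero_mul]
    exact mul_nonneg_iff_of_pos_left two_pos

lemma norm_add_le_of_cpair_le_neg_one {x α : E} (h : cpair x α ≤ -1) : ‖x + α‖ ≤ ‖x‖ := by
  refine le_of_sq_le_sq ?_ (norm_nonneg x)
  calc ‖x + α‖ ^ 2 = ‖x‖ ^ 2 + (cpair x α + 1) * ‖α‖ ^ 2 := by
        rw [norm_add_sq_real, ← cpair_mul_norm_sq]; ring
    _ ≤ ‖x‖ ^ 2 := by nlinarith [sq_nonneg ‖α‖]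

lemma wrefl_eq_reflection (α x : E) : wrefl α x = (ℝ ∙ α)ᗮ.reflection x := by
  rw [Submodule.reflection_orthogonal_apply, Submodule.reflection_singleton_apply, wrefl, cpair,
    real_inner_self_eq_norm_sq, real_inner_comm x α]
  module

lemma norm_wrefl (α x : E) : ‖wrefl α x‖ = ‖x‖ := by
  rw [wrefl_eq_reflection, LinearIsometryEquiv.norm_map]

end Cpair

lemma eq_zero_of_norm_add_le {x y : E} (h : ‖x + y‖ ≤ ‖x‖) (hxy : 0 ≤ ⟪x, y⟫) : y = 0 := by
  have hsq := pow_le_pow_left₀ (norm_nonneg _) h 2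
  rw [norm_add_sq_real] at hsq
  exact norm_eq_zero.mp (pow_eq_zero_iff two_ne_zero |>.mp <| by linarith [sq_nonneg ‖y‖])

lemma sum_fin_ite_val_eq {M : Type*} [AddCommMonoid M] (m n : ℕ) (x : M) :
    (∑ j : Fin n, if (j : ℕ) = m then x else 0) = if m < n then x else 0 := by
  rw [Fin.sum_univ_eq_sum_range (fun j => if j = m then x else 0), Finset.sum_ite_eq']
  simp only [Finset.mem_range]

lemma single_le_iff_le_apply {ι M : Type*} [DecidableEq ι] [AddZeroClass M] [Preorder M]
    [CanonicallyOrderedAdd M] {c : ι → M} {i : ι} {m : M} : Pi.single i m ≤ c ↔ m ≤ c i := by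
  simp [Pi.single, update_le_iff]

section NatComb

variable {ι M : Type*} [Fintype ι]

/-- The combination `∑ i, c i • a i` of the vectors `a i` with natural number coefficients. It is
taken over `ℕ`, so that it is additive in `c` and the order of coefficient vectors is that of
`ι → ℕ`. -/
def natComb [AddCommMonoid M] (a : ι → M) : (ι → ℕ) →ₗ[ℕ] M := Fintype.linearCombination ℕ a

lemma natComb_one [AddCommMonoid M] (a : ι → M) : natComb a 1 = ∑ i, a i := by
  simp [natComb, Fintype.linearCombination_apply]

lemma natComb_single [AddCommMonoid M] [DecidableEq ι] (a : ι → M) (k : ι) (n : ℕ) :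
    natComb a (Pi.single k n) = n • a k :=
  Fintype.linearCombination_apply_single ℕ a k n

lemma natComb_tsub [AddCommGroup M] (a : ι → M) {c d : ι → ℕ} (h : d ≤ c) :
    natComb a (c - d) = natComb a c - natComb a d := by
  rw [eq_sub_iff_add_eq, ← map_add, tsub_add_cancel_of_le h]

lemma natComb_eq_sum [AddCommGroup M] [Module ℝ M] (a : ι → M) (c : ι → ℕ) :
    natComb a c = ∑ i, (c i : ℝ) • a i := by
  simp only [natComb, Fintype.linearCombination_apply, Nat.cast_smul_eq_nsmul]

lemma natComb_injective [AddCommGroup M] [Module ℝ M] {a : ι → M} (ha : LinearIndependent ℝ a) :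
    Function.Injective (natComb a) :=
  (ha.restrict_scalars' ℕ).fintypeLinearCombination_injective

variable {a : ι → E}

lemma inner_natComb_right (x : E) (c : ι → ℕ) :
    ⟪x, natComb a c⟫ = ∑ i, (c i : ℝ) * ⟪x, a i⟫ := by
  simp only [natComb_eq_sum, inner_sum, real_inner_smul_right]

lemma inner_natComb_left (c : ι → ℕ) (x : E) :
    ⟪natComb a c, x⟫ = ∑ i, (c i : ℝ) * ⟪a i, x⟫ := by
  simp only [real_inner_comm x, inner_natComb_right]

lemma inner_natComb_nonneg {x : E} (hx : ∀ i, 0 ≤ ⟪x, a i⟫) (c : ι → ℕ) :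
    0 ≤ ⟪x, natComb a c⟫ := by
  rw [inner_natComb_right]
  exact Finset.sum_nonneg fun i _ => mul_nonneg (Nat.cast_nonneg _) (hx i)

lemma inner_eq_zero_of_inner_natComb_nonpos {x : E} (hx : ∀ i, 0 ≤ ⟪x, a i⟫) {c : ι → ℕ}
    (h : ⟪x, natComb a c⟫ ≤ 0) {i : ι} (hi : c i ≠ 0) : ⟪x, a i⟫ = 0 := by
  have hterm : ∀ j ∈ Finset.univ, 0 ≤ (c j : ℝ) * ⟪x, a j⟫ := fun j _ =>
    mul_nonneg (Nat.cast_nonneg _) (hx j)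
  have hsum : ∑ j, (c j : ℝ) * ⟪x, a j⟫ = 0 :=
    (inner_natComb_right x c ▸ h).antisymm (Finset.sum_nonneg hterm)
  have hzero := (Finset.sum_eq_zero_iff_of_nonneg hterm).mp hsum i (Finset.mem_univ i)
  exact (mul_eq_zero.mp hzero).resolve_left (Nat.cast_ne_zero.mpr hi)

lemma exists_inner_natComb_pos {c : ι → ℕ} (hc : natComb a c ≠ 0) :
    ∃ k, 0 < ⟪natComb a c, a k⟫ := by
  by_contra! h
  have hnonneg := inner_natComb_nonneg (x := -natComb a c) (a := a)
    (fun i => by rw [inner_neg_left]; linarith [h i]) c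
  rw [inner_neg_left, neg_nonneg] at hnonneg
  exact hc (real_inner_self_nonpos.mp hnonneg)

lemma inner_natComb_le_inner_natComb (ha : Pairwise fun i j => ⟪a i, a j⟫ ≤ 0)
    {c d : ι → ℕ} (h : c ≤ d) {k : ι} (hk : c k = d k) :
    ⟪natComb a d, a k⟫ ≤ ⟪natComb a c, a k⟫ := by
  rw [inner_natComb_left, inner_natComb_left]
  refine Finset.sum_le_sum fun i _ => ?_
  rcases eq_or_ne i k with rfl | hik
  · rw [hk]
  · exact mul_le_mul_of_nonpos_right (Nat.cast_le.mpr (h i)) (ha hik)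

lemma ne_zero_of_inner_natComb_pos (ha : Pairwise fun i j => ⟪a i, a j⟫ ≤ 0)
    {c : ι → ℕ} {k : ι} (h : 0 < ⟪natComb a c, a k⟫) : c k ≠ 0 := fun hk => by
  have hle := inner_natComb_le_inner_natComb ha (zero_le (a := c)) (k := k) hk.symm
  rw [map_zero, inner_zero_left] at hle
  exact h.not_ge hle

lemma inner_natComb_inf_nonneg (ha : Pairwise fun i j => ⟪a i, a j⟫ ≤ 0)
    {c d : ι → ℕ} {k : ι} (hc : 0 ≤ ⟪natComb a c, a k⟫)
    (hd : 0 ≤ ⟪natComb a d, a k⟫) : 0 ≤ ⟪natComb a (c ⊓ d), a k⟫ := by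
  rcases le_total (c k) (d k) with h | h
  · exact hc.trans (inner_natComb_le_inner_natComb ha inf_le_left (inf_of_le_left h))
  · exact hd.trans (inner_natComb_le_inner_natComb ha inf_le_right (inf_of_le_right h))

lemma inner_eq_zero_of_inner_natComb_nonneg (ha : Pairwise fun i j => ⟪a i, a j⟫ ≤ 0)
    {c : ι → ℕ} {i j : ι}
    (h : 0 ≤ ⟪natComb a c, a j⟫) (hi : c i ≠ 0) (hj : c j = 0) : ⟪a i, a j⟫ = 0 := by
  classical
  have hij : i ≠ j := fun hij => hi (hij ▸ hj)
  have hmul : 0 ≤ (c i : ℝ) * ⟪a i, a j⟫ := by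
    have hle : Pi.single i (c i) ≤ c := single_le_iff_le_apply.mpr le_rfl
    have := h.trans <| inner_natComb_le_inner_natComb ha hle (k := j)
      (by rw [Pi.single_eq_of_ne hij.symm, hj])
    rwa [natComb_single, ← Nat.cast_smul_eq_nsmul ℝ, real_inner_smul_left] at this
  exact (ha hij).antisymm (nonneg_of_mul_nonneg_right hmul (by positivity))

end NatComb

namespace RootSystemData

variable {R : RootSystemData ℓ E}

section Roots

lemma eq_of_sum_smul_simple_eq {x y : Fin ℓ → ℝ}
    (h : ∑ i, x i • R.simple i = ∑ i, y i • R.simple i) : x = y :=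
  R.simple_indep.fintypeLinearCombination_injective h

lemma nonneg_or_nonpos_of_sum_smul_simple_mem {x : Fin ℓ → ℝ}
    (hx : ∑ i, x i • R.simple i ∈ R.roots) : 0 ≤ x ∨ x ≤ 0 := by
  rcases R.root_decomp _ hx with ⟨c, hc⟩ | ⟨c, hc⟩
  · left
    rw [eq_of_sum_smul_simple_eq hc]
    exact fun i => Nat.cast_nonneg _
  · right
    simp only [← Finset.sum_neg_distrib, ← neg_smul] at hc
    rw [eq_of_sum_smul_simple_eq hc]
    exact fun i => neg_nonpos.mpr (Nat.cast_nonneg _)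

lemma sum_single_smul_simple (k : Fin ℓ) (t : ℝ) :
    ∑ i, (Pi.single k t : Fin ℓ → ℝ) i • R.simple i = t • R.simple k :=
  Fintype.linearCombination_apply_single ℝ R.simple k t

variable (R) in
lemma pairwise_inner_simple_nonpos : Pairwise fun i j => ⟪R.simple i, R.simple j⟫ ≤ 0 := by
  intro i j hij
  set n := cpair (R.simple i) (R.simple j) with hn
  set x : Fin ℓ → ℝ := Pi.single i 1 - Pi.single j n with hx
  have hmem : ∑ k, x k • R.simple k ∈ R.roots := by
    have hrefl : ∑ k, x k • R.simple k = wrefl (R.simple j) (R.simple i) := by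
      simp only [hx, Pi.sub_apply, sub_smul, Finset.sum_sub_distrib, sum_single_smul_simple,
        one_smul, wrefl, hn]
    exact hrefl ▸ R.reflect_mem _ (R.simple_mem j) _ (R.simple_mem i)
  rcases nonneg_or_nonpos_of_sum_smul_simple_mem hmem with h | h
  · have hj : n ≤ 0 := by simpa [hx, hij.symm] using h j
    linarith [cpair_mul_norm_sq (R.simple i) (R.simple j),
      mul_nonpos_of_nonpos_of_nonneg hj (sq_nonneg ‖R.simple j‖)]
  · have hi : (1 : ℝ) ≤ 0 := by simpa [hx, hij] using h i
    linarith

lemma isRootOf_univ {α : E} (hα : α ∈ R.roots) : R.IsRootOf Finset.univ α := by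
  refine ⟨hα, ?_⟩
  rcases R.root_decomp α hα with ⟨c, hc⟩ | ⟨c, hc⟩
  · exact ⟨fun i => c i, fun i _ => Finset.mem_univ i, by simpa using hc⟩
  · exact ⟨fun i => -c i, fun i _ => Finset.mem_univ i, by simpa using hc⟩

lemma IsShortRootOf.norm_le {θ γ : E} (hθ : R.IsShortRootOf Finset.univ θ) (hγ : γ ∈ R.roots) :
    ‖θ‖ ≤ ‖γ‖ := by
  have h := hθ.2 γ (isRootOf_univ hγ)
  rw [real_inner_self_eq_norm_sq, real_inner_self_eq_norm_sq] at h
  exact le_of_sq_le_sq h (norm_nonneg γ)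

lemma IsShortRootOf.wrefl {θ α : E} (hθ : R.IsShortRootOf Finset.univ θ) (hα : α ∈ R.roots) :
    R.IsShortRootOf Finset.univ (wrefl α θ) := by
  refine ⟨isRootOf_univ (R.reflect_mem _ hα _ hθ.1.1), fun γ hγ => ?_⟩
  rw [real_inner_self_eq_norm_sq, norm_wrefl, ← real_inner_self_eq_norm_sq]
  exact hθ.2 γ hγ

end Roots

section Order

lemma wle_iff_exists_natComb {x y : E} :
    R.wle x y ↔ ∃ c, y - x = natComb R.simple c := by
  simp only [wle, natComb_eq_sum]

lemma wle_sub_natComb (x : E) (c : Fin ℓ → ℕ) : R.wle (x - natComb R.simple c) x :=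
  wle_iff_exists_natComb.mpr ⟨c, sub_sub_cancel _ _⟩

lemma sub_natComb_wle_sub_natComb (x : E) {c d : Fin ℓ → ℕ} (h : d ≤ c) :
    R.wle (x - natComb R.simple c) (x - natComb R.simple d) :=
  wle_iff_exists_natComb.mpr ⟨c - d, by rw [natComb_tsub _ h, sub_sub_sub_cancel_left]⟩

lemma natComb_wle_natComb {c d : Fin ℓ → ℕ} (h : d ≤ c) :
    R.wle (natComb R.simple d) (natComb R.simple c) :=
  wle_iff_exists_natComb.mpr ⟨c - d, (natComb_tsub _ h).symm⟩

end Order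

section Dominant

variable (R) in
/-- The weight lattice, which bundles `R.IsIntegral` as an additive subgroup. -/
def weightLattice : AddSubgroup E :=
  ⨅ α ∈ R.roots, (Int.castAddHom ℝ).range.comap (corootForm α).toAddMonoidHom

lemma mem_weightLattice {x : E} : x ∈ R.weightLattice ↔ R.IsIntegral x := by
  simp [weightLattice, IsIntegral, AddSubgroup.mem_iInf, AddSubgroup.mem_zmultiples_iff,
    corootForm_apply, eq_comm]

lemma isIntegral_of_mem_roots {α : E} (hα : α ∈ R.roots) : R.IsIntegral α :=
  fun β hβ => R.cpair_int β hβ α hα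

variable (R) in
lemma isIntegral_natComb (c : Fin ℓ → ℕ) : R.IsIntegral (natComb R.simple c) := by
  rw [← mem_weightLattice, natComb, Fintype.linearCombination_apply]
  exact sum_mem fun i _ => nsmul_mem (mem_weightLattice.mpr (isIntegral_of_mem_roots
    (R.simple_mem i))) _

lemma IsIntegral.add {x y : E} (hx : R.IsIntegral x) (hy : R.IsIntegral y) :
    R.IsIntegral (x + y) :=
  mem_weightLattice.mp (add_mem (mem_weightLattice.mpr hx) (mem_weightLattice.mpr hy))

lemma IsIntegral.sub {x y : E} (hx : R.IsIntegral x) (hy : R.IsIntegral y) :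
    R.IsIntegral (x - y) :=
  mem_weightLattice.mp (sub_mem (mem_weightLattice.mpr hx) (mem_weightLattice.mpr hy))

lemma IsIntegral.norm_add_root_le {x α : E} (hx : R.IsIntegral x) (hα : α ∈ R.roots)
    (h : ⟪x, α⟫ < 0) : ‖x + α‖ ≤ ‖x‖ := by
  obtain ⟨n, hn⟩ := hx α hα
  have hneg : cpair x α < 0 := not_le.mp fun h' => h.not_ge (cpair_nonneg_iff.mp h')
  rw [hn] at hneg
  refine norm_add_le_of_cpair_le_neg_one ?_
  rw [hn]
  exact_mod_cast Int.le_sub_one_of_lt (Int.cast_lt_zero.mp hneg)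

lemma isDominant_iff {x : E} :
    R.IsDominant x ↔ R.IsIntegral x ∧ ∀ i, 0 ≤ ⟪x, R.simple i⟫ := by
  simp only [IsDominant, cpair_nonneg_iff]

lemma IsDominant.inner_simple_nonneg {x : E} (hx : R.IsDominant x) (i : Fin ℓ) :
    0 ≤ ⟪x, R.simple i⟫ :=
  (isDominant_iff.mp hx).2 i

lemma IsDominant.exists_eq_natComb {α : E} (hdom : R.IsDominant α) (hα : α ∈ R.roots) :
    ∃ c, α = natComb R.simple c := by
  rcases R.root_decomp α hα with ⟨c, hc⟩ | ⟨c, hc⟩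
  · exact ⟨c, by rw [hc, natComb_eq_sum]⟩
  · rw [← natComb_eq_sum] at hc
    have hinner := inner_natComb_nonneg hdom.inner_simple_nonneg c
    rw [← neg_eq_iff_eq_neg.mpr hc, inner_neg_right, neg_nonneg, real_inner_self_nonpos] at hinner
    exact absurd hinner (R.root_ne_zero α hα)

lemma isDominant_natComb_inf {c d : Fin ℓ → ℕ} (hc : R.IsDominant (natComb R.simple c))
    (hd : R.IsDominant (natComb R.simple d)) : R.IsDominant (natComb R.simple (c ⊓ d)) :=
  isDominant_iff.mpr ⟨R.isIntegral_natComb _, fun k =>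
    inner_natComb_inf_nonneg R.pairwise_inner_simple_nonpos (hc.inner_simple_nonneg k)
      (hd.inner_simple_nonneg k)⟩

lemma one_le_of_isDominant_natComb {c : Fin ℓ → ℕ} (hc : c ≠ 0)
    (hdom : R.IsDominant (natComb R.simple c)) : 1 ≤ c := by
  have hsupp : ({i | c i ≠ 0} : Finset (Fin ℓ)) = Finset.univ := by
    refine R.irred _ ?_ fun i hi j hj => ?_
    · obtain ⟨i, hi⟩ := Function.ne_iff.mp hc
      exact ⟨i, by simpa using hi⟩
    · exact inner_eq_zero_of_inner_natComb_nonneg R.pairwise_inner_simple_nonpos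
        (hdom.inner_simple_nonneg j) (by simpa using hi) (by simpa using hj)
  intro i
  have hi := hsupp ▸ Finset.mem_univ i
  exact Nat.one_le_iff_ne_zero.mpr (by simpa using hi)

end Dominant

section Descent

lemma IsIntegral.exists_add_single_norm_le {x : E} (hx : R.IsIntegral x) {c : Fin ℓ → ℕ}
    {k : Fin ℓ} (hxk : 0 ≤ ⟪x, R.simple k⟫) (h : ⟪x - natComb R.simple c, R.simple k⟫ < 0) :
    ∃ d, c = d + Pi.single k 1 ∧
      ‖x - natComb R.simple d‖ ≤ ‖x - natComb R.simple c‖ := by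
  have hck : c k ≠ 0 := ne_zero_of_inner_natComb_pos R.pairwise_inner_simple_nonpos <| by
    rw [inner_sub_left] at h; linarith
  obtain ⟨d, rfl⟩ := le_iff_exists_add'.mp <|
    single_le_iff_le_apply.mpr (Nat.one_le_iff_ne_zero.mpr hck)
  refine ⟨d, rfl, ?_⟩
  convert (hx.sub (R.isIntegral_natComb _)).norm_add_root_le (R.simple_mem k) h using 2
  rw [map_add, natComb_single, one_smul, ← sub_sub, sub_add_cancel]

lemma IsDominant.exists_isDominant_sub_natComb {x : E} (hx : R.IsDominant x) (c : Fin ℓ → ℕ) :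
    ∃ d ≤ c, R.IsDominant (x - natComb R.simple d) ∧
      ‖x - natComb R.simple d‖ ≤ ‖x - natComb R.simple c‖ := by
  induction c using WellFoundedLT.induction with
  | ind c ih =>
    by_cases hdom : ∀ k, 0 ≤ ⟪x - natComb R.simple c, R.simple k⟫
    · exact ⟨c, le_rfl, isDominant_iff.mpr ⟨hx.1.sub (R.isIntegral_natComb c), hdom⟩, le_rfl⟩
    · push Not at hdom
      obtain ⟨k, hk⟩ := hdom
      obtain ⟨e, rfl, hnorm⟩ := hx.1.exists_add_single_norm_le (hx.inner_simple_nonneg k) hk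
      obtain ⟨d, hd, hddom, hdnorm⟩ := ih e (lt_add_of_pos_right e (Pi.single_pos.mpr one_pos))
      exact ⟨d, hd.trans le_self_add, hddom, hdnorm.trans hnorm⟩

lemma exists_norm_simple_le {c : Fin ℓ → ℕ} (hc : c ≠ 0) :
    ∃ k, ‖R.simple k‖ ≤ ‖natComb R.simple c‖ := by
  induction c using WellFoundedLT.induction with
  | ind c ih =>
    have hne : natComb R.simple c ≠ 0 :=
      (map_ne_zero_iff _ (natComb_injective R.simple_indep)).mpr hc
    obtain ⟨k, hk⟩ := exists_inner_natComb_pos hne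
    have hzero : R.IsIntegral 0 := mem_weightLattice.mp (zero_mem _)
    obtain ⟨d, rfl, hnorm⟩ := hzero.exists_add_single_norm_le (c := c) (k := k)
      (inner_zero_left _).ge (by rwa [zero_sub, inner_neg_left, neg_lt_zero])
    rw [zero_sub, zero_sub, norm_neg, norm_neg] at hnorm
    rcases eq_or_ne d 0 with rfl | hd
    · exact ⟨k, by rw [zero_add, natComb_single, one_smul]⟩
    · obtain ⟨j, hj⟩ := ih d (lt_add_of_pos_right d (Pi.single_pos.mpr one_pos)) hd
      exact ⟨j, hj.trans hnorm⟩

end Descent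

section HighestShortRoot

variable {θ : E}

lemma IsHighestShortRoot.isDominant (hθ : R.IsHighestShortRoot Finset.univ θ) :
    R.IsDominant θ := by
  refine ⟨isIntegral_of_mem_roots hθ.1.1.1, fun k => ?_⟩
  obtain ⟨c, hc⟩ := hθ.2 _ (hθ.1.wrefl (R.simple_mem k))
  rw [wrefl, sub_sub_cancel, ← sum_single_smul_simple] at hc
  have hk := congrFun (eq_of_sum_smul_simple_eq hc) k
  rw [Pi.single_eq_same] at hk
  exact hk ▸ Nat.cast_nonneg _

lemma ne_zero_of_natComb_mem_roots {c : Fin ℓ → ℕ} (hc : natComb R.simple c ∈ R.roots) :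
    c ≠ 0 := fun h =>
  R.root_ne_zero _ hc (by rw [h, map_zero])

lemma IsShortRootOf.le_of_isDominant {c b : Fin ℓ → ℕ}
    (hshort : R.IsShortRootOf Finset.univ (natComb R.simple c))
    (hc : R.IsDominant (natComb R.simple c)) (hb : R.IsDominant (natComb R.simple b))
    (hb1 : 1 ≤ b) : c ≤ b := by
  have hinf : c ⊓ b ≠ 0 := by
    obtain ⟨i, hi⟩ := Function.ne_iff.mp (ne_zero_of_natComb_mem_roots hshort.1.1)
    exact Function.ne_iff.mpr
      ⟨i, (lt_min (Nat.pos_of_ne_zero hi) (Nat.lt_of_succ_le (hb1 i))).ne'⟩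
  obtain ⟨k, hk⟩ := exists_norm_simple_le (R := R) hinf
  have hsplit : natComb R.simple (c ⊓ b) + natComb R.simple (c - c ⊓ b) = natComb R.simple c := by
    rw [← map_add, add_tsub_cancel_of_le inf_le_left]
  have hrest : natComb R.simple (c - c ⊓ b) = 0 :=
    eq_zero_of_norm_add_le (hsplit ▸ (hshort.norm_le (R.simple_mem k)).trans hk)
      (inner_natComb_nonneg (isDominant_natComb_inf hc hb).inner_simple_nonneg _)
  have hdiff : c - c ⊓ b = 0 :=
    natComb_injective R.simple_indep (hrest.trans (map_zero _).symm)
  exact (tsub_eq_zero_iff_le.mp hdiff).trans inf_le_right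

lemma IsHighestShortRoot.wle_natComb (hθ : R.IsHighestShortRoot Finset.univ θ)
    {b : Fin ℓ → ℕ} (hb : R.IsDominant (natComb R.simple b)) (hb1 : 1 ≤ b) :
    R.wle θ (natComb R.simple b) := by
  obtain ⟨c, rfl⟩ := hθ.isDominant.exists_eq_natComb hθ.1.1.1
  exact natComb_wle_natComb (hθ.1.le_of_isDominant hθ.isDominant hb hb1)

lemma IsHighestShortRoot.eq_sum_simple (hθ : R.IsHighestShortRoot Finset.univ θ)
    (hdom : R.IsDominant (∑ i, R.simple i)) : θ = ∑ i, R.simple i := by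
  obtain ⟨c, rfl⟩ := hθ.isDominant.exists_eq_natComb hθ.1.1.1
  rw [← natComb_one] at hdom ⊢
  have hle : c ≤ 1 := hθ.1.le_of_isDominant hθ.isDominant hdom le_rfl
  have hge : 1 ≤ c :=
    one_le_of_isDominant_natComb (ne_zero_of_natComb_mem_roots hθ.1.1.1) hθ.isDominant
  rw [hle.antisymm hge]

end HighestShortRoot

section LowTriple

variable {lam mu nu : E}

lemma LowTriple.symm (h : R.LowTriple lam mu nu) : R.LowTriple mu lam nu := by
  obtain ⟨hlam, hmu, hnu, hlow, hle⟩ := h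
  refine ⟨hmu, hlam, hnu, fun mu' lam' hmu' hlam' hmule hlamle hnule => ?_, ?_⟩
  · exact (hlow lam' mu' hlam' hmu' hlamle hmule (by rwa [add_comm])).symm
  · rwa [add_comm mu lam]

lemma LowTriple.exists_sub_eq_natComb (h : R.LowTriple lam mu nu) :
    ∃ b, 1 ≤ b ∧ lam + mu - nu = natComb R.simple b := by
  obtain ⟨d, hd⟩ := wle_iff_exists_natComb.mp h.2.2.2.2
  refine ⟨d + 1, le_add_self, ?_⟩
  rw [map_add, natComb_one, ← hd]
  abel

lemma LowTriple.norm_le_norm_sub (h : R.LowTriple lam mu nu) : ‖lam‖ ≤ ‖mu - nu‖ := by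
  obtain ⟨b, -, hb⟩ := h.exists_sub_eq_natComb
  obtain ⟨d, hdb, hdom, hnorm⟩ := h.1.exists_isDominant_sub_natComb b
  have hnu : R.wle nu (lam - natComb R.simple d + mu) := by
    have := sub_natComb_wle_sub_natComb (R := R) (lam + mu) hdb
    rwa [← hb, sub_sub_cancel, add_sub_right_comm] at this
  have hlam : lam - natComb R.simple d = lam :=
    (h.2.2.2.1 _ mu hdom h.2.1 (wle_sub_natComb lam d) ⟨0, by simp⟩ hnu).1
  calc ‖lam‖ ≤ ‖lam - natComb R.simple b‖ := by rwa [hlam] at hnorm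
    _ = ‖mu - nu‖ := by rw [← hb, norm_sub_rev]; congr 1; abel

lemma LowTriple.inner_sub_nonpos (h : R.LowTriple lam mu nu) :
    ⟪nu, lam + mu - nu⟫ ≤ 0 := by
  have hlam := pow_le_pow_left₀ (norm_nonneg _) h.norm_le_norm_sub 2
  have hmu := pow_le_pow_left₀ (norm_nonneg _) h.symm.norm_le_norm_sub 2
  rw [norm_sub_sq_real, real_inner_comm] at hlam hmu
  rw [inner_sub_right, inner_add_right, real_inner_self_eq_norm_sq]
  linarith

lemma LowTriple.inner_simple_eq_zero (h : R.LowTriple lam mu nu) (k : Fin ℓ) :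
    ⟪nu, R.simple k⟫ = 0 := by
  obtain ⟨b, hb1, hb⟩ := h.exists_sub_eq_natComb
  exact inner_eq_zero_of_inner_natComb_nonpos h.2.2.1.inner_simple_nonneg
    (hb ▸ h.inner_sub_nonpos) (Nat.one_le_iff_ne_zero.mp (hb1 k))

lemma LowTriple.isDominant_sub (h : R.LowTriple lam mu nu) : R.IsDominant (lam + mu - nu) := by
  refine isDominant_iff.mpr ⟨(h.1.1.add h.2.1.1).sub h.2.2.1.1, fun k => ?_⟩
  rw [inner_sub_left, inner_add_left, h.inner_simple_eq_zero, sub_zero]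
  exact add_nonneg (h.1.inner_simple_nonneg k) (h.2.1.inner_simple_nonneg k)

end LowTriple

section TypeB

lemma IsTypeB.cpair_simple (hR : R.IsTypeB) (j k : Fin ℓ) :
    cpair (R.simple j) (R.simple k) =
      (if (j : ℕ) = k then 2 else 0) + (if (j : ℕ) = k + 1 then -1 else 0) +
        if (j : ℕ) + 1 = k then (if (k : ℕ) + 1 = ℓ then -2 else -1) else 0 := by
  rw [hR k j]
  have hj := j.2
  simp only [Fin.ext_iff]
  split_ifs <;> first | omega | norm_num

lemma IsTypeB.cpair_sum_simple (hR : R.IsTypeB) (k : Fin ℓ) :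
    cpair (∑ i, R.simple i) (R.simple k) =
      if (k : ℕ) = 0 then if ℓ = 1 then 2 else 1 else 0 := by
  have hk := k.2
  simp only [cpair_sum, hR.cpair_simple, Finset.sum_add_distrib, sum_fin_ite_val_eq]
  rcases hkm : (k : ℕ) with _ | m
  · simp only [Nat.add_one_ne_zero, if_false, if_true, Finset.sum_const_zero]
    split_ifs <;> first | omega | norm_num
  · simp only [Nat.add_right_cancel_iff, Nat.add_one_ne_zero, if_false, sum_fin_ite_val_eq]
    split_ifs <;> first | omega | norm_num

lemma IsTypeB.isDominant_sum_simple (hR : R.IsTypeB) : R.IsDominant (∑ i, R.simple i) := by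
  refine ⟨natComb_one R.simple ▸ R.isIntegral_natComb 1, fun k => ?_⟩
  rw [hR.cpair_sum_simple]
  split_ifs <;> norm_num

end TypeB

end RootSystemData

/-- In type B_ℓ the highest short root `θ` equals `α₁ + ... + α_ℓ`, so
`β ≥ Σᵢ αᵢ` implies `β ≥ θ`; and in general, for any irreducible reduced `Φ`,
if `(λ,μ,ν)` is a low triple then `λ + μ - ν ≥ θ`. -/
theorem statement19 (R : RootSystemData ℓ E) :
    (R.IsTypeB → ∀ θ : E, R.IsHighestShortRoot Finset.univ θ →
      θ = ∑ i, R.simple i ∧ ∀ β : E, R.wle (∑ i, R.simple i) β → R.wle θ β) ∧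
    (∀ lam mu nu θ : E, R.LowTriple lam mu nu →
      R.IsHighestShortRoot Finset.univ θ → R.wle θ (lam + mu - nu)) := by
  refine ⟨fun hB θ hθ => ?_, fun lam mu nu θ hlow hθ => ?_⟩
  · have hsum : θ = ∑ i, R.simple i := hθ.eq_sum_simple hB.isDominant_sum_simple
    exact ⟨hsum, fun β hβ => hsum ▸ hβ⟩
  · obtain ⟨b, hb1, hb⟩ := hlow.exists_sub_eq_natComb
    rw [hb]
    exact hθ.wle_natComb (hb ▸ hlow.isDominant_sub) hb1
end
end
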